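/- Let K be an imaginary quadratic field other than ℚ(√−1) and ℚ(√−3), with discriminant d_K, and let θ_K = (d_K + √d_K)/2 ∈ ℍ. Let m ≥ 2 and n ≥ 1 be integers such that m has at least two distinct prime factors. Then the singular value h_{m,n}(θ_K) is an algebraic integer whose multiplicative inverse is also an algebraic integer; that is, h_{m,n}(θ_K) is a unit of the ring of all algebraic integers. -/

import Mathlib

/-!
Let `γ` run over `SL(2, ℤ)`. The functions `h ∘ γ`, for `h` the Weierstrass unit, form a finite
family `S` that is stable under `SL(2, ℤ)`: by homogeneity of `℘`, the function `h ∘ γ` is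
`(℘(c) - ℘(a)) / (℘(b) - ℘(a))` for torsion points `a, b, c` of the lattice `ℤτ + ℤ` that depend
only on `γ` modulo `mn`. The theorem follows from three facts.

* Every member of `S`, and its inverse, has a Laurent expansion in `exp (2πiτ/N)` with algebraic
  integer coefficients (`unitQ_hA`). Indeed `℘(z) - ℘(b)` is, up to a factor independent of `z`,
  a quotient of theta functions (`thetaQuot_eq`, a consequence of Liouville's theorem), so that
  `(℘(c) - ℘(a)) / (℘(b) - ℘(a))` is a product of theta values and their inverses
  (`wp_ratio`). These theta values are taken at `b`, `b ± a`, `c`, `c ± a`, points of order `m` or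
  `mn` in `ℂ / (ℤτ + ℤ)`, and so of an order with at least two distinct prime factors. At such a
  point the leading coefficient of the product expansion of theta is a root of unity, possibly
  times `1 - ζ` with `ζ` a root of unity whose order is not a prime power; then `1 - ζ` is a unit
  (`unitQ_theta`).
* The coefficients of `∏_{f ∈ S} (X - f)` are invariant under `SL(2, ℤ)`, holomorphic, with
  integral expansion at the cusp; subtracting multiples of powers of `j` to remove the polar part
  shows that they are polynomials in `j` with algebraic integer coefficients (`level_one`). Hence
  the members of `S` are integral over `j`, pointwise (`isIntegral_of_stable`); the same holds for
  their inverses.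
* `j(θ_K)` is an algebraic integer (`jj_integral_CM`). A point with complex multiplication is fixed
  by an integral matrix of positive nonsquare determinant `n`, so `θ_K` is a zero of
  `∏ (j - j ∘ A)`, the product being over the finitely many functions `j ∘ A` with `det A = n`.
  This product is a polynomial in `j` by `level_one`, and its leading coefficient is a unit,
  because when `n` is not a square `j` and `j ∘ A` have poles of different orders at the cusp, so
  that each difference has a root of unity as leading coefficient (`jj_integral_of_fixed`).
-/

open scoped Real

/-- The point `a ω₁ + b ω₂` of the lattice spanned by `ω₁, ω₂`. -/
noncomputable def latticePt (ω₁ ω₂ : ℂ) (p : ℤ × ℤ) : ℂ := p.1 * ω₁ + p.2 * ω₂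

/-- The Weierstrass ℘-function relative to the lattice `ℤω₁ + ℤω₂`:
`℘(z;Λ) = 1/z² + Σ_{ω ∈ Λ∖{0}} (1/(z−ω)² − 1/ω²)`. -/
noncomputable def wp (ω₁ ω₂ z : ℂ) : ℂ :=
  1 / z ^ 2 + ∑' p : {p : ℤ × ℤ // p ≠ 0},
    (1 / (z - latticePt ω₁ ω₂ p.1) ^ 2 - 1 / latticePt ω₁ ω₂ p.1 ^ 2)

/-- `℘_{[r,s]}(τ) = ℘(rτ + s; [τ,1])`. -/
noncomputable def wprs (r s : ℚ) (τ : ℂ) : ℂ := wp τ 1 ((r : ℂ) * τ + (s : ℂ))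

/-- `q^x := e^{2πixτ}`. -/
noncomputable def qpow (τ : ℂ) (x : ℝ) : ℂ := Complex.exp (2 * (π : ℂ) * Complex.I * (x : ℂ) * τ)

/-- The Siegel function `g_{[r,s]}(τ)`. -/
noncomputable def siegel (r s : ℚ) (τ : ℂ) : ℂ :=
  -qpow τ ((1/2) * ((r : ℝ) ^ 2 - (r : ℝ) + 1/6)) *
    Complex.exp ((π : ℂ) * Complex.I * (s : ℂ) * ((r : ℂ) - 1)) *
    (1 - qpow τ (r : ℝ) * Complex.exp (2 * (π : ℂ) * Complex.I * (s : ℂ))) *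
    ∏' n : ℕ, ((1 - qpow τ ((n + 1 : ℝ) + (r : ℝ)) * Complex.exp (2 * (π : ℂ) * Complex.I * (s : ℂ))) *
      (1 - qpow τ ((n + 1 : ℝ) - (r : ℝ)) * Complex.exp (-(2 * (π : ℂ) * Complex.I * (s : ℂ)))))

/-- The Dedekind eta function with the paper's normalization
`η(τ) = √(2π) e^{πi/4} q^{1/24} ∏_{n≥1} (1 − qⁿ)`. -/
noncomputable def eta (τ : ℂ) : ℂ :=
  (Real.sqrt (2 * π) : ℂ) * Complex.exp ((π : ℂ) * Complex.I / 4) * qpow τ (1/24) *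
    ∏' n : ℕ, (1 - qpow τ (n + 1 : ℝ))

/-- `g₂(τ) = 60 Σ_{ω ∈ [τ,1]∖{0}} ω⁻⁴`. -/
noncomputable def g2 (τ : ℂ) : ℂ := 60 * ∑' p : {p : ℤ × ℤ // p ≠ 0}, 1 / latticePt τ 1 p.1 ^ 4

/-- `g₃(τ) = 140 Σ_{ω ∈ [τ,1]∖{0}} ω⁻⁶`. -/
noncomputable def g3 (τ : ℂ) : ℂ := 140 * ∑' p : {p : ℤ × ℤ // p ≠ 0}, 1 / latticePt τ 1 p.1 ^ 6

/-- The elliptic modular function `j(τ) = 1728 g₂(τ)³ / (g₂(τ)³ − 27 g₃(τ)²)`. -/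
noncomputable def jfun (τ : ℂ) : ℂ := 1728 * g2 τ ^ 3 / (g2 τ ^ 3 - 27 * g3 τ ^ 2)

/-- The Weierstrass unit `h_{m,n}(τ)`. -/
noncomputable def hweier (m n : ℕ) (τ : ℂ) : ℂ :=
  (wprs 0 (1 / (m * n : ℚ)) τ - wprs (1 / (m : ℚ)) 0 τ) /
    (wprs 0 (1 / (m : ℚ)) τ - wprs (1 / (m : ℚ)) 0 τ)

section DiscExpansions

open Complex Metric Filter Topology
open scoped Nat

/-! ### Power series with algebraic integer coefficients on the unit disc -/

/-- `g` is given on the open unit disc by a power series whose coefficients are algebraic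
integers. Nothing is asked of `g` outside the disc. -/
def DiscInt (g : ℂ → ℂ) : Prop :=
  ∃ b : ℕ → ℂ, (∀ n, IsIntegral ℤ (b n)) ∧ ∀ x, ‖x‖ < 1 → HasSum (fun n => b n * x ^ n) (g x)

namespace DiscInt

lemma congr {f g : ℂ → ℂ} (hf : DiscInt f) (h : ∀ x, ‖x‖ < 1 → g x = f x) : DiscInt g := by
  obtain ⟨b, hb, hs⟩ := hf
  exact ⟨b, hb, fun x hx => by rw [h x hx]; exact hs x hx⟩

lemma const {c : ℂ} (hc : IsIntegral ℤ c) : DiscInt (fun _ => c) := by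
  refine ⟨fun n => if n = 0 then c else 0, fun n => ?_, fun x _ => ?_⟩
  · dsimp only; split_ifs; exacts [hc, isIntegral_zero]
  · convert hasSum_ite_eq 0 c using 2 with n
    split_ifs with h <;> simp [h]

lemma shift {b : ℕ → ℂ} {x s : ℂ} (e : ℕ) (h : HasSum (fun n => b n * x ^ n) s) :
    HasSum (fun n => (if e ≤ n then b (n - e) else 0) * x ^ n) (x ^ e * s) := by
  rw [← (add_left_injective e).hasSum_iff]
  · refine (h.mul_left (x ^ e)).congr_fun fun n => ?_
    simp [pow_add]; ring
  · intro n hn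
    rw [if_neg, zero_mul]
    intro h
    exact hn ⟨n - e, by simp [h]⟩

lemma pow_mul {g : ℂ → ℂ} (hg : DiscInt g) (e : ℕ) : DiscInt (fun x => x ^ e * g x) := by
  obtain ⟨b, hb, hs⟩ := hg
  refine ⟨fun n => if e ≤ n then b (n - e) else 0, fun n => ?_, fun x hx => shift e (hs x hx)⟩
  dsimp only; split_ifs; exacts [hb _, isIntegral_zero]

lemma add {f g : ℂ → ℂ} (hf : DiscInt f) (hg : DiscInt g) : DiscInt (fun x => f x + g x) := by
  obtain ⟨b, hb, hs⟩ := hf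
  obtain ⟨c, hc, ht⟩ := hg
  refine ⟨fun n => b n + c n, fun n => (hb n).add (hc n), fun x hx => ?_⟩
  simpa [add_mul] using (hs x hx).add (ht x hx)

lemma neg {f : ℂ → ℂ} (hf : DiscInt f) : DiscInt (fun x => - f x) := by
  obtain ⟨b, hb, hs⟩ := hf
  refine ⟨fun n => - b n, fun n => (hb n).neg, fun x hx => ?_⟩
  simpa using (hs x hx).neg

lemma hasSum_mul {b c : ℕ → ℂ} {x s t : ℂ} (hs : HasSum (fun n => b n * x ^ n) s)
    (ht : HasSum (fun n => c n * x ^ n) t) :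
    HasSum (fun n => (∑ p ∈ Finset.HasAntidiagonal.antidiagonal n, b p.1 * c p.2) * x ^ n) (s * t) := by
  have h1 := hs.summable.norm
  have h2 := ht.summable.norm
  have h3 := summable_norm_sum_mul_antidiagonal_of_summable_norm h1 h2
  have h4 := tsum_mul_tsum_eq_tsum_sum_antidiagonal_of_summable_norm h1 h2
  rw [hs.tsum_eq, ht.tsum_eq] at h4
  rw [h4]
  refine h3.of_norm.hasSum.congr_fun fun n => ?_
  rw [Finset.sum_mul]
  refine Finset.sum_congr rfl fun p hp => ?_
  rw [← Finset.HasAntidiagonal.mem_antidiagonal.1 hp, pow_add]; ring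

lemma mul {f g : ℂ → ℂ} (hf : DiscInt f) (hg : DiscInt g) : DiscInt (fun x => f x * g x) := by
  obtain ⟨b, hb, hs⟩ := hf
  obtain ⟨c, hc, ht⟩ := hg
  exact ⟨_, fun n => IsIntegral.sum _ fun p _ => (hb p.1).mul (hc p.2),
    fun x hx => hasSum_mul (hs x hx) (ht x hx)⟩

lemma pow {f : ℂ → ℂ} (hf : DiscInt f) (k : ℕ) : DiscInt (fun x => f x ^ k) := by
  induction k with
  | zero => simpa using const isIntegral_one
  | succ k ih => simpa [pow_succ] using ih.mul hf

lemma monomial {c : ℂ} (hc : IsIntegral ℤ c) (e : ℕ) : DiscInt (fun x => c * x ^ e) := by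
  simpa [mul_comm] using (const hc).pow_mul e

lemma sub {f g : ℂ → ℂ} (hf : DiscInt f) (hg : DiscInt g) : DiscInt (fun x => f x - g x) := by
  simpa [sub_eq_add_neg] using hf.add hg.neg

lemma sum {ι : Type*} (s : Finset ι) {f : ι → ℂ → ℂ} (h : ∀ i ∈ s, DiscInt (f i)) :
    DiscInt (fun x => ∑ i ∈ s, f i x) := by
  classical
  induction s using Finset.induction_on with
  | empty => simpa using const isIntegral_zero
  | insert a s ha ih =>
    simp only [Finset.sum_insert ha]
    exact (h a (by simp)).add (ih fun i hi => h i (by simp [hi]))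

lemma prod {ι : Type*} (s : Finset ι) {f : ι → ℂ → ℂ} (h : ∀ i ∈ s, DiscInt (f i)) :
    DiscInt (fun x => ∏ i ∈ s, f i x) := by
  classical
  induction s using Finset.induction_on with
  | empty => simpa using const isIntegral_one
  | insert a s ha ih =>
    simp only [Finset.prod_insert ha]
    exact (h a (by simp)).mul (ih fun i hi => h i (by simp [hi]))

/-- Substitution `x ↦ ζ x ^ k`. -/
lemma comp_pow {g : ℂ → ℂ} (hg : DiscInt g) {ζ : ℂ} (hζ : IsIntegral ℤ ζ) (hζ1 : ‖ζ‖ ≤ 1)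
    {k : ℕ} (hk : k ≠ 0) : DiscInt (fun x => g (ζ * x ^ k)) := by
  obtain ⟨b, hb, hs⟩ := hg
  refine ⟨fun n => if k ∣ n then b (n / k) * ζ ^ (n / k) else 0, fun n => ?_, fun x hx => ?_⟩
  · dsimp only; split_ifs; exacts [(hb _).mul (hζ.pow _), isIntegral_zero]
  · have hx' : ‖ζ * x ^ k‖ < 1 := by
      rw [norm_mul, norm_pow]
      have : ‖x‖ ^ k < 1 := pow_lt_one₀ (norm_nonneg _) hx hk
      nlinarith [norm_nonneg ζ, pow_nonneg (norm_nonneg x) k]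
    have h := hs _ hx'
    rw [← (mul_right_injective₀ hk : Function.Injective (fun n : ℕ => k * n)).hasSum_iff]
    · convert h using 2 with n
      simp [hk, mul_pow, _root_.pow_mul]; ring
    · intro n hn
      dsimp only
      rw [if_neg, zero_mul]
      rintro ⟨m, rfl⟩
      exact hn ⟨m, rfl⟩

lemma hasFPowerSeries {b : ℕ → ℂ} {g : ℂ → ℂ}
    (hs : ∀ x, ‖x‖ < 1 → HasSum (fun n => b n * x ^ n) (g x)) :
    HasFPowerSeriesOnBall g (.ofScalars ℂ b) 0 1 := by
  constructor
  · refine le_of_forall_lt_imp_le_of_dense fun r hr ↦ ?_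
    lift r to NNReal using hr.ne_top
    apply FormalMultilinearSeries.le_radius_of_summable
    have hr1 : (r : ℝ) < 1 := by exact_mod_cast hr
    have := (hs (r : ℝ) (by simpa using hr1)).summable.norm
    simpa [norm_mul] using this
  · simp
  · intro y hy
    rw [← ENNReal.coe_one, Metric.eball_coe, NNReal.coe_one, mem_ball_zero_iff] at hy
    simpa [mul_comm] using hs y hy

lemma coeff_unique {b c : ℕ → ℂ} {g : ℂ → ℂ}
    (hs : ∀ x, ‖x‖ < 1 → HasSum (fun n => b n * x ^ n) (g x))
    (ht : ∀ x, ‖x‖ < 1 → HasSum (fun n => c n * x ^ n) (g x)) : b = c := by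
  have := (hasFPowerSeries hs).hasFPowerSeriesAt.eq_formalMultilinearSeries
    (hasFPowerSeries ht).hasFPowerSeriesAt
  exact FormalMultilinearSeries.ofScalars_series_injective (𝕜 := ℂ) ℂ this

lemma differentiableOn {g : ℂ → ℂ} (hg : DiscInt g) : DifferentiableOn ℂ g (ball 0 1) := by
  obtain ⟨b, hb, hs⟩ := hg
  have := (hasFPowerSeries hs).differentiableOn
  rwa [← ENNReal.coe_one, Metric.eball_coe, NNReal.coe_one] at this

lemma continuousAt_zero {g : ℂ → ℂ} (hg : DiscInt g) : ContinuousAt g 0 :=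
  (hg.differentiableOn.differentiableAt (ball_mem_nhds 0 one_pos)).continuousAt

lemma coeff_zero {b : ℕ → ℂ} {g : ℂ → ℂ}
    (hs : ∀ x, ‖x‖ < 1 → HasSum (fun n => b n * x ^ n) (g x)) : b 0 = g 0 := by
  have h := hs 0 (by simp)
  refine HasSum.unique ?_ h
  convert hasSum_ite_eq 0 (b 0) using 2 with n
  split_ifs with h <;> simp [h]

lemma isIntegral_zero {g : ℂ → ℂ} (hg : DiscInt g) : IsIntegral ℤ (g 0) := by
  obtain ⟨b, hb, hs⟩ := hg
  rw [← coeff_zero hs]; exact hb 0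

/-- The Taylor coefficients of a function which is holomorphic on the disc. -/
lemma hasSum_taylor {g : ℂ → ℂ} (hg : DifferentiableOn ℂ g (ball 0 1)) (x : ℂ) (hx : ‖x‖ < 1) :
    HasSum (fun n => ((n ! : ℂ)⁻¹ * iteratedDeriv n g 0) * x ^ n) (g x) := by
  have := Complex.hasSum_taylorSeries_on_ball (r := 1) (by simpa using hg)
    (show x ∈ ball (0 : ℂ) _ by simpa using hx)
  refine this.congr_fun fun n => ?_
  simp only [sub_zero, smul_eq_mul]; ring

lemma coeff_eq_taylor {b : ℕ → ℂ} {g : ℂ → ℂ}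
    (hs : ∀ x, ‖x‖ < 1 → HasSum (fun n => b n * x ^ n) (g x)) (n : ℕ) :
    b n = (n ! : ℂ)⁻¹ * iteratedDeriv n g 0 := by
  have hd := (hasFPowerSeries hs).differentiableOn
  rw [← ENNReal.coe_one, Metric.eball_coe, NNReal.coe_one] at hd
  exact congrFun (coeff_unique hs (hasSum_taylor hd)) n

/-- A power series with algebraic integer coefficients, without zeros on the disc and with unit
constant term, has an inverse of the same kind. -/
lemma inv {g : ℂ → ℂ} (hg : DiscInt g) (hne : ∀ x, ‖x‖ < 1 → g x ≠ 0)
    (h0 : IsIntegral ℤ (g 0)⁻¹) : DiscInt (fun x => (g x)⁻¹) := by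
  have hd := hg.differentiableOn.inv (fun x hx => hne x (by simpa using hx))
  obtain ⟨b, hb, hs⟩ := hg
  set c : ℕ → ℂ := fun n => (n ! : ℂ)⁻¹ * iteratedDeriv n (fun x => (g x)⁻¹) 0 with hc
  have ht : ∀ x, ‖x‖ < 1 → HasSum (fun n => c n * x ^ n) (g x)⁻¹ := hasSum_taylor hd
  refine ⟨c, ?_, ht⟩
  have hb0 : b 0 = g 0 := coeff_zero hs
  have hg0 : g 0 ≠ 0 := hne 0 (by simp)
  have key : (fun n => ∑ p ∈ Finset.HasAntidiagonal.antidiagonal n, b p.1 * c p.2) =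
      fun n => if n = 0 then (1 : ℂ) else 0 := by
    refine coeff_unique (g := fun _ => 1) (fun x hx => ?_) (fun x hx => ?_)
    · have := hasSum_mul (hs x hx) (ht x hx)
      rwa [mul_inv_cancel₀ (hne x hx)] at this
    · convert hasSum_ite_eq 0 (1 : ℂ) using 2 with n
      split_ifs with h <;> simp [h]
  intro n
  induction n using Nat.strong_induction_on with
  | _ n ih =>
    -- Comparison of coefficients in `g * g⁻¹ = 1` gives a recursion for those of `g⁻¹`.
    have h := congrFun key n
    rw [Finset.Nat.sum_antidiagonal_eq_sum_range_succ (fun i j => b i * c j),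
      Finset.sum_range_succ'] at h
    have hcn : c n = (g 0)⁻¹ * ((if n = 0 then (1 : ℂ) else 0) -
        ∑ k ∈ Finset.range n, b (k + 1) * c (n - (k + 1))) := by
      rw [← h]; simp [hb0, hg0]
    rw [hcn]
    refine h0.mul (IsIntegral.sub ?_ (IsIntegral.sum _ fun k hk => (hb _).mul (ih _ ?_)))
    · split_ifs; exacts [isIntegral_one, _root_.isIntegral_zero]
    · have := Finset.mem_range.1 hk; omega

lemma iteratedDeriv_tendsto {F : ℕ → ℂ → ℂ} {g : ℂ → ℂ}
    (hF : ∀ n, DifferentiableOn ℂ (F n) (ball 0 1))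
    (h : TendstoLocallyUniformlyOn F g atTop (ball 0 1)) (k : ℕ) :
    (∀ n, DifferentiableOn ℂ (iteratedDeriv k (F n)) (ball 0 1)) ∧
    TendstoLocallyUniformlyOn (fun n => iteratedDeriv k (F n)) (iteratedDeriv k g) atTop
      (ball 0 1) := by
  induction k with
  | zero => simpa using ⟨hF, h⟩
  | succ k ih =>
    simp only [iteratedDeriv_succ]
    exact ⟨fun n => (ih.1 n).deriv isOpen_ball,
      ih.2.deriv (Eventually.of_forall ih.1) isOpen_ball⟩

/-- The Taylor coefficients of a locally uniform limit, when the coefficients of the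
approximations stabilise. -/
lemma hasSum_of_tendsto {F : ℕ → ℂ → ℂ} {g : ℂ → ℂ} {B : ℕ → ℕ → ℂ} {b : ℕ → ℂ}
    (hF : ∀ n x, ‖x‖ < 1 → HasSum (fun k => B n k * x ^ k) (F n x))
    (h : TendstoLocallyUniformlyOn F g atTop (ball 0 1))
    (hB : ∀ k, ∀ᶠ n in atTop, B n k = b k) (x : ℂ) (hx : ‖x‖ < 1) :
    HasSum (fun k => b k * x ^ k) (g x) := by
  have hd : ∀ n, DifferentiableOn ℂ (F n) (ball 0 1) := fun n => by
    have hd := (hasFPowerSeries (hF n)).differentiableOn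
    rwa [← ENNReal.coe_one, Metric.eball_coe, NNReal.coe_one] at hd
  have hgd := h.differentiableOn (Eventually.of_forall hd) isOpen_ball
  convert hasSum_taylor hgd x hx using 3 with k
  have h1 := (iteratedDeriv_tendsto hd h k).2.tendsto_at (mem_ball_self one_pos)
  have h2 := h1.const_mul ((k ! : ℂ)⁻¹)
  refine tendsto_nhds_unique (Tendsto.congr' ?_ tendsto_const_nhds) h2
  filter_upwards [hB k] with n hn
  rw [← hn, coeff_eq_taylor (hF n) k]

end DiscInt

section infiniteProduct

variable {c : ℕ → ℂ} {e : ℕ → ℕ}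

/-- The coefficients of the partial products of `∏ (1 - c n * x ^ e n)`. -/
noncomputable def prodCoeff (c : ℕ → ℂ) (e : ℕ → ℕ) : ℕ → ℕ → ℂ
  | 0, k => if k = 0 then 1 else 0
  | n + 1, k => prodCoeff c e n k - c n * (if e n ≤ k then prodCoeff c e n (k - e n) else 0)

lemma prodCoeff_hasSum (n : ℕ) (x : ℂ) :
    HasSum (fun k => prodCoeff c e n k * x ^ k) (∏ i ∈ Finset.range n, (1 - c i * x ^ e i)) := by
  induction n with
  | zero =>
    simp only [Finset.range_zero, Finset.prod_empty, prodCoeff]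
    convert hasSum_ite_eq 0 (1 : ℂ) using 2 with n
    split_ifs with h <;> simp [h]
  | succ n ih =>
    rw [Finset.prod_range_succ]
    have := ih.sub ((DiscInt.shift (e n) ih).mul_left (c n))
    rw [show ∀ p : ℂ, p * (1 - c n * x ^ e n) = p - c n * (x ^ e n * p) from fun p => by ring]
    refine this.congr_fun fun k => ?_
    simp only [prodCoeff]; ring

lemma prodCoeff_isIntegral (hc : ∀ n, IsIntegral ℤ (c n)) (n k : ℕ) :
    IsIntegral ℤ (prodCoeff c e n k) := by
  induction n generalizing k with
  | zero => simp only [prodCoeff]; split_ifs; exacts [isIntegral_one, isIntegral_zero]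
  | succ n ih =>
    simp only [prodCoeff]
    refine (ih k).sub ((hc n).mul ?_)
    split_ifs; exacts [ih _, isIntegral_zero]

/-- Since `e n ≥ n + 1`, the factor of index `n` does not affect the coefficients of index at most
`n`. -/
lemma prodCoeff_stable (he : ∀ n, n + 1 ≤ e n) {n k : ℕ} (h : k ≤ n) :
    prodCoeff c e n k = prodCoeff c e k k := by
  induction n, h using Nat.le_induction with
  | base => rfl
  | succ n hn ih =>
    have := he n
    rw [prodCoeff, if_neg (by omega), ih]; simp

lemma norm_mul_pow_le (hc1 : ∀ n, ‖c n‖ ≤ 1) (he : ∀ n, n + 1 ≤ e n) {x : ℂ} (hx : ‖x‖ ≤ 1)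
    (n : ℕ) : ‖c n * x ^ e n‖ ≤ ‖x‖ ^ (n + 1) := by
  rw [norm_mul, norm_pow]
  have h1 : ‖x‖ ^ e n ≤ ‖x‖ ^ (n + 1) := pow_le_pow_of_le_one (norm_nonneg _) hx (he n)
  nlinarith [hc1 n, norm_nonneg (c n), pow_nonneg (norm_nonneg x) (e n)]

lemma summable_prod_aux (hc1 : ∀ n, ‖c n‖ ≤ 1) (he : ∀ n, n + 1 ≤ e n) {x : ℂ} (hx : ‖x‖ < 1) :
    Summable fun n => ‖c n * x ^ e n‖ :=
  Summable.of_nonneg_of_le (fun _ => norm_nonneg _) (norm_mul_pow_le hc1 he hx.le)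
    ((summable_nat_add_iff 1).mpr (summable_geometric_of_lt_one (norm_nonneg _) hx))

lemma prod_tendstoLocallyUniformlyOn (hc1 : ∀ n, ‖c n‖ ≤ 1) (he : ∀ n, n + 1 ≤ e n) :
    TendstoLocallyUniformlyOn (fun n x => ∏ i ∈ Finset.range n, (1 - c i * x ^ e i))
      (fun x => ∏' i, (1 - c i * x ^ e i)) atTop (ball 0 1) := by
  rw [tendstoLocallyUniformlyOn_iff_forall_isCompact isOpen_ball]
  intro K hK hcK
  rcases K.eq_empty_or_nonempty with rfl | hN
  · exact tendstoUniformlyOn_empty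
  · obtain ⟨q₀, hq₀, hmax⟩ := hcK.exists_isMaxOn hN continuous_norm.continuousOn
    have hq1 : ‖q₀‖ < 1 := by simpa using hK hq₀
    have := Summable.hasProdUniformlyOn_nat_one_add (f := fun n x => - (c n * x ^ e n)) hcK
      (u := fun n => ‖q₀‖ ^ (n + 1))
      ((summable_nat_add_iff 1).mpr (summable_geometric_of_lt_one (norm_nonneg _) hq1))
      (Eventually.of_forall fun n x hx => by
        rw [norm_neg]
        exact (norm_mul_pow_le hc1 he ((hmax hx).trans hq1.le) n).trans
          (pow_le_pow_left₀ (norm_nonneg _) (hmax hx) _)) (fun n => by fun_prop)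
    simpa [← sub_eq_add_neg] using this.tendstoUniformlyOn_finsetRange

/-- The infinite product `∏ (1 - c n * x ^ e n)` with `e n ≥ n + 1` and algebraic integers `c n` of
absolute value at most `1` is a power series with algebraic integer coefficients. -/
lemma discInt_tprod (hc : ∀ n, IsIntegral ℤ (c n)) (hc1 : ∀ n, ‖c n‖ ≤ 1)
    (he : ∀ n, n + 1 ≤ e n) : DiscInt (fun x => ∏' i, (1 - c i * x ^ e i)) :=
  ⟨fun k => prodCoeff c e k k, fun k => prodCoeff_isIntegral hc k k, fun x hx =>
    DiscInt.hasSum_of_tendsto (fun n x _ => prodCoeff_hasSum n x)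
      (prod_tendstoLocallyUniformlyOn hc1 he)
      (fun k => (eventually_ge_atTop k).mono fun _ h => prodCoeff_stable he h) x hx⟩

lemma tprod_ne_zero' (hc1 : ∀ n, ‖c n‖ ≤ 1) (he : ∀ n, n + 1 ≤ e n) {x : ℂ} (hx : ‖x‖ < 1) :
    ∏' i, (1 - c i * x ^ e i) ≠ 0 := by
  have hs := summable_prod_aux hc1 he hx
  have := tprod_one_add_ne_zero_of_summable (f := fun n ↦ -(c n * x ^ e n)) (fun i h => ?_)
    (by simpa using hs)
  · simpa [← sub_eq_add_neg] using this
  · have h1 : ‖c i * x ^ e i‖ < 1 := (norm_mul_pow_le hc1 he hx.le i).trans_lt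
      (pow_lt_one₀ (norm_nonneg _) hx (by omega))
    have : c i * x ^ e i = 1 := by linear_combination -h
    simp [this] at h1

lemma tprod_zero' (he : ∀ n, n + 1 ≤ e n) : ∏' i, (1 - c i * (0 : ℂ) ^ e i) = 1 := by
  have : ∀ i, e i ≠ 0 := fun i => by have := he i; omega
  simp [this]

end infiniteProduct

end DiscExpansions

section ModularFunctions

open UpperHalfPlane hiding I
open ModularForm MatrixGroups EisensteinSeries Function
open Complex Metric Filter Topology
open scoped Real Nat Manifold

/-! ### Functions on the upper half-plane with integral `q`-expansions -/

/-- The local parameter `exp (2πiτ/N)`. -/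
noncomputable def qN (N : ℕ) (τ : ℍ) : ℂ := Periodic.qParam (N : ℝ) τ

lemma qN_ne_zero (N : ℕ) (τ : ℍ) : qN N τ ≠ 0 := Periodic.qParam_ne_zero _

lemma qN_eq (N : ℕ) (τ : ℍ) : qN N τ = cexp (2 * π * I * τ / N) := by
  simp [qN, Periodic.qParam]

lemma norm_qN_lt_one {N : ℕ} (hN : N ≠ 0) (τ : ℍ) : ‖qN N τ‖ < 1 :=
  Periodic.norm_qParam_lt_one (by positivity) τ.im_pos

lemma qN_pow {N M : ℕ} (hN : N ≠ 0) (hM : M ≠ 0) (τ : ℍ) : qN (N * M) τ ^ M = qN N τ := by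
  rw [qN_eq, qN_eq, ← Complex.exp_nat_mul]
  congr 1
  push_cast
  field_simp

lemma qN_pow_self {N : ℕ} (hN : N ≠ 0) (τ : ℍ) : qN N τ ^ N = qN 1 τ := by
  simpa using qN_pow one_ne_zero hN τ

lemma exists_qN_eq {N : ℕ} (hN : N ≠ 0) {x : ℂ} (hx : ‖x‖ < 1) (h0 : x ≠ 0) :
    ∃ τ : ℍ, qN N τ = x := by
  have h1 := Periodic.im_invQParam_pos_of_norm_lt_one (h := (N : ℝ)) (by positivity) hx h0
  exact ⟨⟨_, h1⟩, Periodic.qParam_right_inv (by positivity) h0⟩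

lemma tendsto_qN {N : ℕ} (hN : N ≠ 0) : Tendsto (qN N) atImInfty (𝓝 0) :=
  qParam_tendsto_atImInfty (by positivity)

/-- `f` is a Laurent series in `exp (2πiτ/N)`, with finite principal part and with algebraic
integers as coefficients. -/
def QInt (N : ℕ) (f : ℍ → ℂ) : Prop :=
  ∃ k : ℕ, ∃ g, DiscInt g ∧ ∀ τ, f τ * qN N τ ^ k = g (qN N τ)

namespace QInt

variable {N : ℕ} {f g : ℍ → ℂ}

lemma of_discInt {g : ℂ → ℂ} (hg : DiscInt g) : QInt N (fun τ => g (qN N τ)) :=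
  ⟨0, g, hg, fun τ => by simp⟩

lemma const {c : ℂ} (hc : IsIntegral ℤ c) : QInt N (fun _ => c) := of_discInt (.const hc)

lemma qpow (k : ℤ) : QInt N (fun τ => qN N τ ^ k) := by
  obtain ⟨n, rfl | rfl⟩ := k.eq_nat_or_neg
  · simpa using of_discInt (N := N) (.monomial isIntegral_one n)
  · refine ⟨n, fun _ => 1, .const isIntegral_one, fun τ => ?_⟩
    simp [qN_ne_zero]

lemma mul (hf : QInt N f) (hg : QInt N g) : QInt N (fun τ => f τ * g τ) := by
  obtain ⟨k, u, hu, h1⟩ := hf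
  obtain ⟨l, v, hv, h2⟩ := hg
  exact ⟨k + l, _, hu.mul hv, fun τ => by rw [← h1, ← h2]; ring⟩

lemma add (hf : QInt N f) (hg : QInt N g) : QInt N (fun τ => f τ + g τ) := by
  obtain ⟨k, u, hu, h1⟩ := hf
  obtain ⟨l, v, hv, h2⟩ := hg
  exact ⟨k + l, _, (hu.pow_mul l).add (hv.pow_mul k), fun τ => by rw [← h1, ← h2]; ring⟩

lemma neg (hf : QInt N f) : QInt N (fun τ => - f τ) := by
  obtain ⟨k, u, hu, h1⟩ := hf
  exact ⟨k, _, hu.neg, fun τ => by rw [← h1]; ring⟩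

lemma pow (hf : QInt N f) (k : ℕ) : QInt N (fun τ => f τ ^ k) := by
  induction k with
  | zero => simpa using const isIntegral_one
  | succ k ih => simpa [pow_succ] using ih.mul hf

lemma sum {ι : Type*} (s : Finset ι) {f : ι → ℍ → ℂ} (h : ∀ i ∈ s, QInt N (f i)) :
    QInt N (fun x => ∑ i ∈ s, f i x) := by
  classical
  induction s using Finset.induction_on with
  | empty => simpa using const isIntegral_zero
  | insert a s ha ih =>
    simp only [Finset.sum_insert ha]
    exact (h a (by simp)).add (ih fun i hi => h i (by simp [hi]))

lemma prod {ι : Type*} (s : Finset ι) {f : ι → ℍ → ℂ} (h : ∀ i ∈ s, QInt N (f i)) :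
    QInt N (fun x => ∏ i ∈ s, f i x) := by
  classical
  induction s using Finset.induction_on with
  | empty => simpa using const isIntegral_one
  | insert a s ha ih =>
    simp only [Finset.prod_insert ha]
    exact (h a (by simp)).mul (ih fun i hi => h i (by simp [hi]))

lemma mdiff (hN : N ≠ 0) (hf : QInt N f) : MDiff f := by
  obtain ⟨k, g, hg, h⟩ := hf
  rw [UpperHalfPlane.mdifferentiable_iff]
  have h1 : DifferentiableOn ℂ (fun z : ℂ => g (Periodic.qParam (N : ℝ) z) /
      Periodic.qParam (N : ℝ) z ^ k) {z | 0 < z.im} := by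
    refine DifferentiableOn.div ?_ ?_ (fun z _ => pow_ne_zero _ (Periodic.qParam_ne_zero _))
    · refine hg.differentiableOn.comp Periodic.differentiable_qParam.differentiableOn ?_
      intro z hz
      simpa using Periodic.norm_qParam_lt_one (h := (N : ℝ)) (by positivity) hz
    · exact (Periodic.differentiable_qParam.pow k).differentiableOn
  refine h1.congr fun z hz => ?_
  have := h ⟨z, hz⟩
  rw [comp_apply, UpperHalfPlane.ofComplex_apply_of_im_pos hz,
    eq_div_iff (pow_ne_zero _ (Periodic.qParam_ne_zero _))]
  exact this

end QInt

/-- Units of the ring of functions satisfying `QInt N`. -/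
def UnitQ (N : ℕ) (f : ℍ → ℂ) : Prop := (∀ τ, f τ ≠ 0) ∧ QInt N f ∧ QInt N (fun τ => (f τ)⁻¹)

namespace UnitQ

variable {N : ℕ} {f g : ℍ → ℂ}

lemma inv (hf : UnitQ N f) : UnitQ N (fun τ => (f τ)⁻¹) :=
  ⟨fun τ => inv_ne_zero (hf.1 τ), hf.2.2, by simpa using hf.2.1⟩

lemma mul (hf : UnitQ N f) (hg : UnitQ N g) : UnitQ N (fun τ => f τ * g τ) :=
  ⟨fun τ => mul_ne_zero (hf.1 τ) (hg.1 τ), hf.2.1.mul hg.2.1, by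
    simpa [mul_inv, mul_comm] using hf.2.2.mul hg.2.2⟩

lemma div (hf : UnitQ N f) (hg : UnitQ N g) : UnitQ N (fun τ => f τ / g τ) := by
  simpa [div_eq_mul_inv] using hf.mul hg.inv

lemma pow (hf : UnitQ N f) (k : ℕ) : UnitQ N (fun τ => f τ ^ k) :=
  ⟨fun τ => pow_ne_zero _ (hf.1 τ), hf.2.1.pow k, by simpa using hf.2.2.pow k⟩

lemma const {c : ℂ} (h0 : c ≠ 0) (hc : IsIntegral ℤ c) (hc' : IsIntegral ℤ c⁻¹) :
    UnitQ N (fun _ => c) := ⟨fun _ => h0, .const hc, .const hc'⟩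

lemma qpow (k : ℤ) : UnitQ N (fun τ => qN N τ ^ k) :=
  ⟨fun τ => zpow_ne_zero _ (qN_ne_zero N τ), .qpow k, by simpa using QInt.qpow (N := N) (-k)⟩

lemma of_discInt (hN : N ≠ 0) {g : ℂ → ℂ} (hg : DiscInt g) (hne : ∀ x, ‖x‖ < 1 → g x ≠ 0)
    (h0 : IsIntegral ℤ (g 0)⁻¹) : UnitQ N (fun τ => g (qN N τ)) :=
  ⟨fun τ => hne _ (norm_qN_lt_one hN τ), .of_discInt hg, .of_discInt (hg.inv hne h0)⟩

end UnitQ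

/-! ### The modular invariant and the level one case -/

/-- The modular invariant `E₄ ^ 3 / Δ`. -/
noncomputable def jj (τ : ℍ) : ℂ := E₄ τ ^ 3 / ModularForm.discriminant τ

lemma discInt_E₄ : ∃ g, DiscInt g ∧ g 0 = 1 ∧ ∀ τ : ℍ, E₄ τ = g (qN 1 τ) := by
  have hc : ∀ m, (qExpansion 1 E₄).coeff m = if m = 0 then 1 else
      (240 * (ArithmeticFunction.sigma 3 m : ℕ) : ℂ) := by
    intro m
    rw [E_qExpansion_coeff _ ⟨2, rfl⟩]
    norm_num [show bernoulli 4 = -1 / 30 by decide +kernel]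
  have hi : ∀ m, IsIntegral ℤ ((qExpansion 1 E₄).coeff m) := by
    intro m
    rw [hc]
    split_ifs
    · exact isIntegral_one
    · exact_mod_cast isIntegral_algebraMap (R := ℤ) (A := ℂ)
        (x := 240 * (ArithmeticFunction.sigma 3 m : ℕ))
  have hs : ∀ x : ℂ, ‖x‖ < 1 → HasSum (fun n => (qExpansion 1 E₄).coeff n * x ^ n)
      (∑' n, (qExpansion 1 E₄).coeff n * x ^ n) := by
    intro x hx
    refine Summable.hasSum ?_
    by_cases h0 : x = 0
    · exact summable_of_ne_finset_zero (s := {0}) (fun n hn => by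
        rw [h0, zero_pow (by simpa using hn), mul_zero])
    · obtain ⟨τ, rfl⟩ := exists_qN_eq one_ne_zero hx h0
      have := ModularForm.hasSum_qExpansion (h := 1) E₄ one_pos one_mem_strictPeriods_SL τ
      simpa [qN] using this.summable
  refine ⟨_, ⟨_, hi, hs⟩, ?_, fun τ => ?_⟩
  · rw [← DiscInt.coeff_zero hs, hc]; simp
  · have := ModularForm.hasSum_qExpansion (h := 1) E₄ one_pos one_mem_strictPeriods_SL τ
    exact (HasSum.tsum_eq (by simpa [qN] using this)).symm

lemma discInt_discriminant : ∃ g, DiscInt g ∧ g 0 = 1 ∧ (∀ x, ‖x‖ < 1 → g x ≠ 0) ∧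
    ∀ τ : ℍ, ModularForm.discriminant τ = qN 1 τ * g (qN 1 τ) := by
  have he : ∀ n : ℕ, n + 1 ≤ n + 1 := fun n => le_rfl
  have h1 : ∀ n : ℕ, ‖(1 : ℂ)‖ ≤ 1 := fun _ => by simp
  refine ⟨fun x => (∏' n : ℕ, (1 - 1 * x ^ (n + 1))) ^ 24,
    (discInt_tprod (fun _ => isIntegral_one) h1 he).pow 24, ?_, fun x hx =>
    pow_ne_zero _ (tprod_ne_zero' h1 he hx), fun τ => ?_⟩
  · simp only [tprod_zero' he, one_pow]
  · rw [ModularForm.discriminant_eq_q_prod]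
    have := (ModularForm.multipliable_one_sub_pow (norm_qN_lt_one one_ne_zero τ)).tprod_pow 24
    simp only [one_mul]
    rw [← this]
    simp [qN, eta_q]

lemma discInt_jj : ∃ e, DiscInt e ∧ e 0 = 1 ∧ ∀ τ : ℍ, jj τ * qN 1 τ = e (qN 1 τ) := by
  obtain ⟨g, hg, hg0, hgE⟩ := discInt_E₄
  obtain ⟨d, hd, hd0, hdne, hdE⟩ := discInt_discriminant
  refine ⟨_, (hg.pow 3).mul (hd.inv hdne (by simpa [hd0] using isIntegral_one)),
    by simp [hg0, hd0], fun τ => ?_⟩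
  have h1 := hdne _ (norm_qN_lt_one one_ne_zero τ)
  have h2 := qN_ne_zero 1 τ
  rw [jj, hgE, hdE]
  field_simp

lemma jj_smul (γ : SL(2, ℤ)) (τ : ℍ) : jj (γ • τ) = jj τ := by
  have hγ : (γ : GL (Fin 2) ℝ) ∈ 𝒮ℒ := ⟨γ, rfl⟩
  have h1 := SlashInvariantForm.slash_action_eqn'' E₄ hγ τ
  have h2 := SlashInvariantForm.slash_action_eqn'' CuspForm.discriminant hγ τ
  rw [CuspForm.coe_discriminant] at h2
  have := denom_ne_zero γ τ
  have h3 := ModularForm.discriminant_ne_zero τ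
  change E₄ (γ • τ) = _ at h1
  change ModularForm.discriminant (γ • τ) = _ at h2
  rw [jj, jj, h1, h2]
  field_simp

lemma QInt_jj {N : ℕ} (hN : N ≠ 0) : QInt N jj := by
  obtain ⟨e, he, -, h⟩ := discInt_jj
  refine ⟨N, _, he.comp_pow isIntegral_one (by simp) hN, fun τ => ?_⟩
  rw [one_mul, qN_pow_self hN, h]

/-- Removal of the constant term of a power series. -/
lemma DiscInt.exists_factor {g : ℂ → ℂ} (hg : DiscInt g) (h0 : g 0 = 0) :
    ∃ g', DiscInt g' ∧ ∀ x, ‖x‖ < 1 → g x = x * g' x := by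
  obtain ⟨b, hb, hs⟩ := hg
  have hb0 : b 0 = 0 := (DiscInt.coeff_zero hs).trans h0
  have key : ∀ x, ‖x‖ < 1 → Summable (fun n => b (n + 1) * x ^ n) := by
    intro x hx
    by_cases hx0 : x = 0
    · exact summable_of_ne_finset_zero (s := {0}) (fun n hn => by
        rw [hx0, zero_pow (by simpa using hn), mul_zero])
    · have := ((summable_nat_add_iff 1).2 (hs x hx).summable).mul_left x⁻¹
      refine this.congr fun n => ?_
      rw [pow_succ]; field_simp
  refine ⟨fun x => ∑' n, b (n + 1) * x ^ n, ⟨_, fun n => hb (n + 1), fun x hx =>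
    (key x hx).hasSum⟩, fun x hx => ?_⟩
  rw [← (hs x hx).tsum_eq, (hs x hx).summable.tsum_eq_zero_add, hb0, ← tsum_mul_left]
  simp only [zero_mul, zero_add]
  refine tsum_congr fun n => ?_
  rw [pow_succ]; ring

lemma qN_T {N : ℕ} (τ : ℍ) :
    qN N (ModularGroup.T • τ) = cexp (2 * π * I / N) * qN N τ := by
  rw [qN_eq, qN_eq, UpperHalfPlane.modular_T_smul, ← Complex.exp_add]
  congr 1
  simp
  ring

/-- A function of `τ` which is invariant under `τ ↦ τ + 1` and is given by a power series in
`exp (2πiτ/N)` is a power series in `exp (2πiτ)`. -/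
lemma DiscInt.exists_of_T {N : ℕ} (hN : N ≠ 0) {g : ℂ → ℂ} (hg : DiscInt g)
    (hT : ∀ τ : ℍ, g (qN N (ModularGroup.T • τ)) = g (qN N τ)) :
    ∃ g', DiscInt g' ∧ ∀ τ, g (qN N τ) = g' (qN 1 τ) := by
  obtain ⟨b, hb, hs⟩ := hg
  set ζ := cexp (2 * π * I / N) with hζdef
  have hζ : IsPrimitiveRoot ζ N := Complex.isPrimitiveRoot_exp N hN
  -- Invariance under `x ↦ ζ x` kills the coefficients whose index is not divisible by `N`.
  have h1 : ∀ n, ¬ N ∣ n → b n = 0 := by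
    have : (fun n => b n * ζ ^ n) = b := by
      refine DiscInt.coeff_unique (g := g) (fun x hx => ?_) hs
      have hx' : ‖ζ * x‖ < 1 := by
        rw [norm_mul, hζ.norm'_eq_one hN, one_mul]; exact hx
      have hgx : g (ζ * x) = g x := by
        by_cases h0 : x = 0
        · simp [h0]
        · obtain ⟨τ, rfl⟩ := exists_qN_eq hN hx h0
          rw [← hT τ, qN_T]
      rw [← hgx]
      refine (hs _ hx').congr_fun fun n => ?_
      rw [mul_pow]; ring
    intro n hn
    have h2 := congrFun this n
    by_contra h3
    exact hn ((hζ.pow_eq_one_iff_dvd n).1 (mul_left_cancel₀ h3 (by rw [mul_one]; exact h2)))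
  have h2 : ∀ x : ℂ, ‖x‖ < 1 → HasSum (fun n => b (N * n) * (x ^ N) ^ n) (g x) := by
    intro x hx
    have := hs x hx
    rw [← (mul_right_injective₀ hN : Function.Injective (fun n : ℕ => N * n)).hasSum_iff] at this
    · refine this.congr_fun fun n => ?_
      simp [_root_.pow_mul]
    · intro n hn
      rw [h1 n, zero_mul]
      rintro ⟨m, rfl⟩
      exact hn ⟨m, rfl⟩
  refine ⟨fun x => ∑' n, b (N * n) * x ^ n, ⟨fun n => b (N * n), fun n => hb _, fun y hy => ?_⟩, fun τ => ?_⟩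
  · refine Summable.hasSum ?_
    by_cases h0 : y = 0
    · exact summable_of_ne_finset_zero (s := {0}) (fun n hn => by
        rw [h0, zero_pow (by simpa using hn), mul_zero])
    · obtain ⟨τ, rfl⟩ := exists_qN_eq one_ne_zero hy h0
      rw [← qN_pow_self hN]
      exact (h2 _ (norm_qN_lt_one hN τ)).summable
  · rw [← qN_pow_self hN]
    exact (h2 _ (norm_qN_lt_one hN τ)).tsum_eq.symm

/-- An invariant holomorphic function on `ℍ` that stays bounded at `i∞` is constant. -/
lemma const_of_invariant {f : ℍ → ℂ} {g : ℂ → ℂ} (hg : DiscInt g)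
    (hfg : ∀ τ, f τ = g (qN 1 τ)) (hinv : ∀ (γ : SL(2, ℤ)) τ, f (γ • τ) = f τ) :
    ∀ τ, f τ = g 0 := by
  have hlim : Tendsto f atImInfty (𝓝 (g 0)) := by
    have := hg.continuousAt_zero.tendsto.comp (tendsto_qN one_ne_zero)
    exact this.congr fun τ => (hfg τ).symm
  have hsl : ∀ γ : SL(2, ℤ), f ∣[(0 : ℤ)] γ = f := by
    intro γ
    ext τ
    rw [SL_slash_apply, hinv]; simp
  let F : ModularForm 𝒮ℒ 0 :=
    { toFun := f
      slash_action_eq' := fun _ ⟨γ, hγ⟩ ↦ hγ ▸ hsl γ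
      holo' := QInt.mdiff one_ne_zero (by simpa [← hfg] using QInt.of_discInt (N := 1) hg)
      bdd_at_cusps' := fun {c} hc => by
        rw [Subgroup.IsArithmetic.isCusp_iff_isCusp_SL2Z] at hc
        rw [OnePoint.isBoundedAt_iff_forall_SL2Z hc]
        intro γ _
        rw [hsl γ]
        exact hlim.isBigO_one ℝ }
  obtain ⟨c, hc⟩ := ModularFormClass.levelOne_weight_zero_const F
  have hf : f = Function.const _ c := hc
  rw [hf] at hlim ⊢
  intro τ
  exact tendsto_nhds_unique tendsto_const_nhds hlim

/-- Induction on the order `K` of the pole at the cusp: subtracting `g 0 * j ^ (K + 1)` removes the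
polar term of order `K + 1`. -/
lemma level_one_aux (K : ℕ) : ∀ {f : ℍ → ℂ} {g : ℂ → ℂ}, DiscInt g →
    (∀ τ, f τ * qN 1 τ ^ K = g (qN 1 τ)) → (∀ (γ : SL(2, ℤ)) τ, f (γ • τ) = f τ) →
    ∃ P : Polynomial (integralClosure ℤ ℂ), ∀ τ, f τ = P.aeval (jj τ) := by
  induction K with
  | zero =>
    intro f g hg hfg hinv
    have := const_of_invariant hg (by simpa using hfg) hinv
    exact ⟨.C ⟨g 0, hg.isIntegral_zero⟩, fun τ => by rw [this τ]; simp⟩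
  | succ K ih =>
    intro f g hg hfg hinv
    obtain ⟨e, he, he0, hej⟩ := discInt_jj
    have hc := hg.isIntegral_zero
    obtain ⟨g', hg', hgg'⟩ := (hg.sub ((DiscInt.const hc).mul (he.pow (K + 1)))).exists_factor
      (by simp [he0])
    obtain ⟨P, hP⟩ := ih (f := fun τ => f τ - g 0 * jj τ ^ (K + 1)) hg' (fun τ => by
      have h1 := hgg' _ (norm_qN_lt_one one_ne_zero τ)
      rw [← hfg, ← hej] at h1
      refine mul_left_cancel₀ (qN_ne_zero 1 τ) ?_
      rw [← h1]; ring) (fun γ τ => by simp only [hinv, jj_smul])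
    refine ⟨P + .C ⟨g 0, hc⟩ * .X ^ (K + 1), fun τ => ?_⟩
    have := hP τ
    simp only [map_add, map_mul, map_pow, Polynomial.aeval_X, Polynomial.aeval_C, ← this]
    change _ = _ + g 0 * _
    ring

/-- **The `q`-expansion principle in level one.** An invariant function with integral expansion
is a polynomial in the modular invariant with algebraic integers as coefficients. -/
theorem level_one {N : ℕ} (hN : N ≠ 0) {f : ℍ → ℂ} (hf : QInt N f)
    (hinv : ∀ (γ : SL(2, ℤ)) τ, f (γ • τ) = f τ) :
    ∃ P : Polynomial (integralClosure ℤ ℂ), ∀ τ, f τ = P.aeval (jj τ) := by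
  obtain ⟨k, g, hg, h⟩ := hf
  have hk : k ≤ N * k := Nat.le_mul_of_pos_left k (Nat.pos_of_ne_zero hN)
  have h1 : ∀ τ, f τ * qN 1 τ ^ k = qN N τ ^ (N * k - k) * g (qN N τ) := by
    intro τ
    rw [← h, ← qN_pow_self hN, ← pow_mul, mul_left_comm, ← pow_add, Nat.sub_add_cancel hk]
  obtain ⟨g', hg', hgg'⟩ := DiscInt.exists_of_T hN (hg.pow_mul (N * k - k)) (fun τ => by
    rw [← h1, ← h1, hinv, qN_T]
    simp)
  exact level_one_aux k hg' (fun τ => by rw [h1, hgg']) hinv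

/-! ### Integrality of the modular invariant at points with complex multiplication -/

/-- If a finite set of functions on `ℍ` is stable under precomposition with `SL(2, ℤ)`, then
symmetric expressions in its members are invariant. -/
lemma prod_smul_of_stable {R : Type*} [CommMonoid R] (S : Finset (ℍ → ℂ))
    (hS : ∀ (γ : SL(2, ℤ)), ∀ f ∈ S, (fun τ => f (γ • τ)) ∈ S) (Φ : ℂ → R) (γ : SL(2, ℤ))
    (τ : ℍ) : ∏ f ∈ S, Φ (f (γ • τ)) = ∏ f ∈ S, Φ (f τ) :=
  Finset.prod_nbij' (fun f τ => f (γ • τ)) (fun f τ => f (γ⁻¹ • τ)) (hS γ) (hS γ⁻¹)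
    (fun f _ => by simp) (fun f _ => by simp) (fun f _ => rfl)

/-- The element of `GL(2, ℝ)` given by an integral matrix of determinant `n ≠ 0`. -/
noncomputable def realMat {n : ℤ} (hn : n ≠ 0) (A : FixedDetMatrix (Fin 2) ℤ n) : GL (Fin 2) ℝ :=
  Matrix.GeneralLinearGroup.mkOfDetNeZero (A.1.map (Int.castRingHom ℝ)) (by
    rw [← RingHom.mapMatrix_apply, ← RingHom.map_det, A.2]
    simpa using hn)

lemma realMat_smul {n : ℤ} (hn : n ≠ 0) (γ : SL(2, ℤ)) (A : FixedDetMatrix (Fin 2) ℤ n) :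
    realMat hn (γ • A) = (γ : GL (Fin 2) ℝ) * realMat hn A := by
  apply Units.ext
  change (γ.1 * A.1).map (Int.castRingHom ℝ) = γ.1.map (Int.castRingHom ℝ) * A.1.map _
  exact Matrix.map_mul

/-- Right multiplication of a matrix of determinant `n` by an element of `SL(2, ℤ)`. -/
def rightMul {n : ℤ} (A : FixedDetMatrix (Fin 2) ℤ n) (γ : SL(2, ℤ)) :
    FixedDetMatrix (Fin 2) ℤ n :=
  ⟨A.1 * γ.1, by rw [Matrix.det_mul, A.2, γ.2, mul_one]⟩

lemma realMat_rightMul {n : ℤ} (hn : n ≠ 0) (γ : SL(2, ℤ)) (A : FixedDetMatrix (Fin 2) ℤ n) :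
    realMat hn (rightMul A γ) = realMat hn A * (γ : GL (Fin 2) ℝ) := by
  apply Units.ext
  change (A.1 * γ.1).map (Int.castRingHom ℝ) = A.1.map (Int.castRingHom ℝ) * γ.1.map _
  exact Matrix.map_mul

lemma coe_realMat_smul {n : ℤ} (hn : 0 < n) (A : FixedDetMatrix (Fin 2) ℤ n) (τ : ℍ) :
    ((realMat hn.ne' A • τ : ℍ) : ℂ) =
      ((A.1 0 0 : ℂ) * τ + A.1 0 1) / ((A.1 1 0 : ℂ) * τ + A.1 1 1) := by
  rw [coe_smul_of_det_pos]
  · rfl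
  · change 0 < (A.1.map (Int.castRingHom ℝ)).det
    rw [← RingHom.mapMatrix_apply, ← RingHom.map_det, A.2]
    simpa using hn

/-- The transform `τ ↦ j (A τ)` of the modular invariant. -/
noncomputable def jA {n : ℤ} (hn : n ≠ 0) (A : FixedDetMatrix (Fin 2) ℤ n) (τ : ℍ) : ℂ :=
  jj (realMat hn A • τ)

lemma jA_smul {n : ℤ} (hn : n ≠ 0) (γ : SL(2, ℤ)) (A : FixedDetMatrix (Fin 2) ℤ n) :
    jA hn (γ • A) = jA hn A := by
  ext τ
  rw [jA, realMat_smul, mul_smul]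
  exact jj_smul γ _

/-- Every `j ∘ A` with `det A = n` is `j ∘ B` for an upper triangular `B` in a finite set of
representatives. -/
lemma exists_reps {n : ℤ} (hn : n ≠ 0) (A : FixedDetMatrix (Fin 2) ℤ n) :
    ∃ B ∈ FixedDetMatrices.reps n, jA hn A = jA hn B := by
  refine FixedDetMatrices.induction_on
    (C := fun A => ∃ B ∈ FixedDetMatrices.reps n, jA hn A = jA hn B) hn ?_ ?_ ?_
  · exact fun A h1 h2 h3 h4 => ⟨A, ⟨h1, h2, h3, h4⟩, rfl⟩
  · rintro B ⟨C, hC, h⟩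
    exact ⟨C, hC, by rw [jA_smul, h]⟩
  · rintro B ⟨C, hC, h⟩
    exact ⟨C, hC, by rw [jA_smul, h]⟩

lemma finite_range_jA {n : ℤ} (hn : n ≠ 0) : (Set.range (jA hn)).Finite := by
  have := Fintype.ofFinite (FixedDetMatrices.reps n)
  refine ((Set.toFinite (FixedDetMatrices.reps n)).image (jA hn)).subset ?_
  rintro _ ⟨A, rfl⟩
  obtain ⟨B, hB, h⟩ := exists_reps hn A
  exact ⟨B, hB, h.symm⟩

/-- A factor of the modular equation of nonsquare level `n` has a unit as leading coefficient. -/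
lemma jj_sub_jA {n : ℕ} (hn : (0 : ℤ) < n) (hsq : ¬ IsSquare (n : ℤ))
    (A : FixedDetMatrix (Fin 2) ℤ n) :
    ∃ (k : ℕ) (g : ℂ → ℂ), DiscInt g ∧ g 0 ≠ 0 ∧ IsIntegral ℤ (g 0)⁻¹ ∧
      ∀ τ, (jj τ - jA hn.ne' A τ) * qN n τ ^ k = g (qN n τ) := by
  have hn0 : n ≠ 0 := by rintro rfl; simp at hn
  obtain ⟨e, he, he0, hej⟩ := discInt_jj
  obtain ⟨B, ⟨h10, h00, -, -⟩, hAB⟩ := exists_reps hn.ne' A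
  have hdet : B.1 0 0 * B.1 1 1 = n := by
    have := B.2
    rwa [Matrix.det_fin_two, h10, mul_zero, sub_zero] at this
  have h11 : 0 < B.1 1 1 := by
    by_contra! h
    nlinarith
  obtain ⟨a, ha⟩ := Int.eq_ofNat_of_zero_le h00.le
  obtain ⟨d, hd⟩ := Int.eq_ofNat_of_zero_le h11.le
  have had : a * d = n := by rw [ha, hd] at hdet; exact_mod_cast hdet
  have hd0 : d ≠ 0 := by rintro rfl; simp [hd] at h11
  have ha0 : a ≠ 0 := by rintro rfl; simp [ha] at h00
  set ζ : ℂ := cexp (2 * π * I * (B.1 0 1) / d) with hζ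
  have hζd : ζ ^ d = 1 := by
    rw [hζ, ← Complex.exp_nat_mul, Complex.exp_eq_one_iff]
    exact ⟨B.1 0 1, by field_simp⟩
  have hζn : ‖ζ‖ = 1 := Complex.norm_eq_one_of_pow_eq_one hζd hd0
  have hζ0 : ζ ≠ 0 := by rw [← norm_pos_iff, hζn]; exact one_pos
  have hζi : IsIntegral ℤ ζ := IsIntegral.of_pow (Nat.pos_of_ne_zero hd0) (by
    rw [hζd]; exact isIntegral_one)
  have hζi' : IsIntegral ℤ ζ⁻¹ := IsIntegral.of_pow (Nat.pos_of_ne_zero hd0) (by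
    rw [inv_pow, hζd, inv_one]; exact isIntegral_one)
  have hq : ∀ τ, qN 1 (realMat hn.ne' B • τ) = ζ * qN n τ ^ (a ^ 2) := by
    intro τ
    rw [qN_eq, qN_eq, coe_realMat_smul hn, h10, ha, hd, hζ, ← Complex.exp_nat_mul,
      ← Complex.exp_add, show (n : ℂ) = a * d by rw [← had]; push_cast; rfl]
    congr 1
    push_cast
    have h1 : (d : ℂ) ≠ 0 := by exact_mod_cast hd0
    have h2 : (a : ℂ) ≠ 0 := by exact_mod_cast ha0
    rw [zero_mul, zero_add]
    field_simp
    ring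
  -- In the parameter `q ^ (1 / n)`, the pole of `j ∘ A` has order `a ^ 2` and that of `j` order `n`.
  have hjA : ∀ τ, jA hn.ne' A τ * qN n τ ^ (a ^ 2) = ζ⁻¹ * e (ζ * qN n τ ^ (a ^ 2)) := by
    intro τ
    rw [hAB, ← hq, ← hej, hq, jA]
    field_simp
  have hj : ∀ τ, jj τ * qN n τ ^ n = e (1 * qN n τ ^ n) := by
    intro τ
    rw [one_mul, qN_pow_self hn0, hej]
  have ha2 : a ^ 2 ≠ 0 := pow_ne_zero _ ha0
  have d1 : DiscInt fun x => e (1 * x ^ n) := he.comp_pow isIntegral_one (by simp) hn0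
  have d2 : DiscInt fun x => ζ⁻¹ * e (ζ * x ^ a ^ 2) :=
    (DiscInt.const hζi').mul (he.comp_pow hζi hζn.le ha2)
  -- The two orders differ since `n` is not a square, so the larger one gives the leading term.
  rcases lt_trichotomy n (a ^ 2) with h | h | h
  · have h0 : a ^ 2 - n ≠ 0 := by omega
    refine ⟨a ^ 2, _, (d1.pow_mul (a ^ 2 - n)).sub d2, ?_, ?_, fun τ => ?_⟩
    · simp [h0, hn0, ha0, he0, hζ0]
    · simpa [h0, hn0, ha0, he0, inv_neg] using hζi.neg
    · rw [← hj, ← hjA, sub_mul, mul_left_comm, ← pow_add, Nat.sub_add_cancel h.le]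
  · exact absurd ⟨(a : ℤ), by rw [h]; push_cast; ring⟩ hsq
  · have h0 : n - a ^ 2 ≠ 0 := by omega
    refine ⟨n, _, d1.sub (d2.pow_mul (n - a ^ 2)), ?_, ?_, fun τ => ?_⟩
    · simp [h0, hn0, ha0, he0]
    · simpa [h0, hn0, ha0, he0] using isIntegral_one
    · rw [← hj, ← hjA, sub_mul, mul_left_comm (qN n τ ^ _), ← pow_add, Nat.sub_add_cancel h.le]

/-- If a function is `P(j)`, then the leading coefficient of its expansion is that of `P`, because
the expansion of `j` begins with `q⁻¹`. -/
lemma leadingCoeff_of_level_one {N : ℕ} (hN : N ≠ 0) {F : ℍ → ℂ} {k : ℕ} {g : ℂ → ℂ}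
    (hg : DiscInt g) (hg0 : g 0 ≠ 0) (hF : ∀ τ, F τ * qN N τ ^ k = g (qN N τ))
    {P : Polynomial (integralClosure ℤ ℂ)} (hP : ∀ τ, F τ = P.aeval (jj τ)) :
    (P.leadingCoeff : ℂ) = g 0 := by
  obtain ⟨e, he, he0, hej⟩ := discInt_jj
  have hlim : Tendsto (fun τ => F τ * qN N τ ^ k) atImInfty (𝓝 (g 0)) :=
    (hg.continuousAt_zero.tendsto.comp (tendsto_qN hN)).congr fun τ => (hF τ).symm
  have hP0 : P ≠ 0 := by
    rintro rfl
    refine hg0 (tendsto_nhds_unique hlim ?_)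
    simp [hP]
  set D := P.natDegree
  have hd : DiscInt fun x => ∑ i ∈ Finset.range (D + 1),
      (P.coeff i : ℂ) * (x ^ (N * (D - i)) * e (1 * x ^ N) ^ i) :=
    DiscInt.sum _ fun i _ => (DiscInt.const (P.coeff i).2).mul
      (((he.comp_pow isIntegral_one (by simp) hN).pow i).pow_mul _)
  have hlim' : Tendsto (fun τ => F τ * qN N τ ^ (N * D)) atImInfty (𝓝 (P.leadingCoeff : ℂ)) := by
    have := hd.continuousAt_zero.tendsto.comp (tendsto_qN hN)
    have h0 : ∑ i ∈ Finset.range (D + 1),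
      (P.coeff i : ℂ) * ((0 : ℂ) ^ (N * (D - i)) * e (1 * 0 ^ N) ^ i) = P.leadingCoeff := by
      rw [Finset.sum_range_succ, Finset.sum_eq_zero]
      · simp [hN, he0, D]
      · intro i hi
        have : N * (D - i) ≠ 0 := mul_ne_zero hN (by have := Finset.mem_range.1 hi; omega)
        rw [zero_pow this]; simp
    rw [h0] at this
    refine this.congr fun τ => ?_
    rw [hP, Polynomial.aeval_eq_sum_range, Finset.sum_mul]
    refine Finset.sum_congr rfl fun i hi => ?_
    have hi' : i ≤ D := Nat.lt_succ_iff.1 (Finset.mem_range.1 hi)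
    have h1 : qN N τ ^ (N * D) = qN N τ ^ (N * (D - i)) * qN N τ ^ (N * i) := by
      rw [← pow_add, ← Nat.mul_add, Nat.sub_add_cancel hi']
    rw [one_mul, qN_pow_self hN, ← hej, mul_pow, ← qN_pow_self hN, ← pow_mul, Algebra.smul_def, h1]
    change _ = (P.coeff i : ℂ) * _ * _
    ring
  have hq0 : ∀ {l : ℕ}, l ≠ 0 → Tendsto (fun τ => qN N τ ^ l) atImInfty (𝓝 0) := fun {l} hl => by
    simpa [hl] using (tendsto_qN hN).pow l
  rcases lt_trichotomy k (N * D) with h | h | h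
  · exfalso
    have h1 := hlim.mul (hq0 (Nat.sub_ne_zero_of_lt h))
    rw [mul_zero] at h1
    have h2 := tendsto_nhds_unique (h1.congr fun τ => by
      rw [mul_assoc, ← pow_add, Nat.add_sub_cancel' h.le]) hlim'
    exact hP0 (Polynomial.leadingCoeff_eq_zero.1 (Subtype.ext h2.symm))
  · subst h; exact tendsto_nhds_unique hlim' hlim
  · exfalso
    have h1 := hlim'.mul (hq0 (Nat.sub_ne_zero_of_lt h))
    rw [mul_zero] at h1
    have h2 := tendsto_nhds_unique (h1.congr fun τ => by
      rw [mul_assoc, ← pow_add, Nat.add_sub_cancel' h.le]) hlim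
    exact hg0 h2.symm

/-- The modular invariant is integral at a fixed point of an integral matrix of nonsquare
determinant: it is a root of the diagonal of the modular equation. -/
theorem jj_integral_of_fixed {n : ℕ} (hn : (0 : ℤ) < n) (hsq : ¬ IsSquare (n : ℤ))
    (A : FixedDetMatrix (Fin 2) ℤ n) (θ : ℍ) (hfix : realMat hn.ne' A • θ = θ) :
    IsIntegral ℤ (jj θ) := by
  classical
  have hn0 : n ≠ 0 := by rintro rfl; simp at hn
  set S := (finite_range_jA hn.ne').toFinset with hSdef
  have hS : ∀ (γ : SL(2, ℤ)), ∀ f ∈ S, (fun τ => f (γ • τ)) ∈ S := by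
    intro γ f hf
    rw [hSdef, Set.Finite.mem_toFinset] at hf ⊢
    obtain ⟨B, rfl⟩ := hf
    refine ⟨rightMul B γ, ?_⟩
    ext τ
    rw [jA, jA, realMat_rightMul, mul_smul]
    rfl
  -- `choose` needs a pair `(k, g)` for every `f`, hence the arbitrary values outside `S`.
  have key : ∀ f : ℍ → ℂ, ∃ (k : ℕ) (g : ℂ → ℂ), f ∈ S → DiscInt g ∧ g 0 ≠ 0 ∧
      IsIntegral ℤ (g 0)⁻¹ ∧ ∀ τ, (jj τ - f τ) * qN n τ ^ k = g (qN n τ) := by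
    intro f
    by_cases hf : f ∈ S
    · obtain ⟨B, rfl⟩ := (Set.Finite.mem_toFinset _).1 hf
      obtain ⟨k, g, h⟩ := jj_sub_jA hn hsq B
      exact ⟨k, g, fun _ => h⟩
    · exact ⟨0, 0, fun h => absurd h hf⟩
  choose k g hkg using key
  have hd : DiscInt fun x => ∏ f ∈ S, g f x := DiscInt.prod _ fun f hf => (hkg f hf).1
  have hF : ∀ τ, (∏ f ∈ S, (jj τ - f τ)) * qN n τ ^ (∑ f ∈ S, k f) = ∏ f ∈ S, g f (qN n τ) := by
    intro τ
    rw [← Finset.prod_pow_eq_pow_sum, ← Finset.prod_mul_distrib]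
    exact Finset.prod_congr rfl fun f hf => (hkg f hf).2.2.2 τ
  have hinv : ∀ (γ : SL(2, ℤ)) τ, ∏ f ∈ S, (jj (γ • τ) - f (γ • τ)) = ∏ f ∈ S, (jj τ - f τ) := by
    intro γ τ
    rw [jj_smul]
    exact prod_smul_of_stable S hS (fun z => jj τ - z) γ τ
  obtain ⟨P, hP⟩ := level_one hn0 (f := fun τ => ∏ f ∈ S, (jj τ - f τ)) ⟨_, _, hd, hF⟩ hinv
  have hlc := leadingCoeff_of_level_one hn0 hd
    (Finset.prod_ne_zero_iff.2 fun f hf => (hkg f hf).2.1) hF hP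
  have hu : IsIntegral ℤ (P.leadingCoeff : ℂ)⁻¹ := by
    rw [hlc, ← Finset.prod_inv_distrib]
    exact IsIntegral.prod _ fun f hf => (hkg f hf).2.2.1
  have hne : (P.leadingCoeff : ℂ) ≠ 0 := by
    rw [hlc]; exact Finset.prod_ne_zero_iff.2 fun f hf => (hkg f hf).2.1
  have hmem : jA hn.ne' A ∈ S := (Set.Finite.mem_toFinset _).2 ⟨A, rfl⟩
  have hroot : P.aeval (jj θ) = 0 := by
    rw [← hP]
    refine Finset.prod_eq_zero hmem ?_
    rw [jA, hfix, sub_self]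
  have hmonic : (Polynomial.C (⟨_, hu⟩ : integralClosure ℤ ℂ) * P).Monic :=
    Polynomial.monic_C_mul_of_mul_leadingCoeff_eq_one (Subtype.ext (inv_mul_cancel₀ hne))
  have hint : IsIntegral (integralClosure ℤ ℂ) (jj θ) := by
    refine ⟨_, hmonic, ?_⟩
    rw [← Polynomial.aeval_def, map_mul, hroot, mul_zero]
  exact isIntegral_trans _ hint

/-- The modular invariant at the quadratic irrationality `(d + √d) / 2`, `d < 0`, is an algebraic
integer. -/
lemma jj_integral_CM {d : ℤ} (hd : d < 0) (θ : ℍ)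
    (h : 4 * (θ : ℂ) ^ 2 - 4 * d * θ + (d ^ 2 - d) = 0) : IsIntegral ℤ (jj θ) := by
  obtain ⟨n, hn⟩ := Int.eq_ofNat_of_zero_le (show 0 ≤ 4 * (d ^ 2 - d) by nlinarith)
  have hn0 : (0 : ℤ) < n := by rw [← hn]; nlinarith
  -- `4 (d ^ 2 - d)` lies strictly between the squares of `2 |d|` and `2 |d| + 1`.
  have hsq : ¬ IsSquare (n : ℤ) := by
    rintro ⟨r, hr⟩
    rw [← hn] at hr
    have h1 : -2 * d < |r| := by
      by_contra! h1
      nlinarith [abs_mul_abs_self r, abs_nonneg r]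
    have h2 : |r| < -2 * d + 1 := by
      by_contra! h1
      nlinarith [abs_mul_abs_self r, abs_nonneg r]
    omega
  -- This matrix has determinant `4 (d ^ 2 - d)`, and the equation of `θ` says that it fixes `θ`.
  refine jj_integral_of_fixed hn0 hsq ⟨!![0, -(d ^ 2 - d); 4, -4 * d], ?_⟩ θ ?_
  · rw [Matrix.det_fin_two, ← hn]; simp; ring
  · ext
    refine (coe_realMat_smul hn0 _ θ).trans ?_
    change (((0 : ℤ) : ℂ) * θ + ((-(d ^ 2 - d) : ℤ) : ℂ)) /
      (((4 : ℤ) : ℂ) * θ + ((-4 * d : ℤ) : ℂ)) = θ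
    have h0 : (4 : ℂ) * θ - 4 * d ≠ 0 := by
      intro h0
      have := congrArg Complex.im h0
      simp at this
      exact θ.im_ne_zero this
    push_cast
    rw [div_eq_iff (by simpa [sub_eq_add_neg] using h0)]
    linear_combination -h

/-! ### Integrality of the members of a finite modular orbit -/

/-- The coefficients of `∏ (X - f)` have integral expansions when the functions `f` do. -/
lemma QInt_coeff {N : ℕ} (S : Finset (ℍ → ℂ)) (hQ : ∀ f ∈ S, QInt N f) :
    ∀ i, QInt N fun τ => (∏ f ∈ S, (Polynomial.X - Polynomial.C (f τ))).coeff i := by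
  classical
  induction S using Finset.induction_on with
  | empty =>
    intro i
    simp only [Finset.prod_empty, Polynomial.coeff_one]
    refine QInt.const ?_
    split_ifs
    exacts [isIntegral_one, isIntegral_zero]
  | insert a s ha ih =>
    intro i
    have ih := ih fun f hf => hQ f (Finset.mem_insert_of_mem hf)
    have hmul := (hQ a (Finset.mem_insert_self a s)).mul (ih i)
    simp only [Finset.prod_insert ha, sub_mul, Polynomial.coeff_sub, Polynomial.coeff_C_mul]
    cases i with
    | zero => simpa using hmul.neg
    | succ i =>
      simp only [Polynomial.coeff_X_mul]
      simpa [sub_eq_add_neg] using (ih i).add hmul.neg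

/-- If a finite set of functions with integral expansions is stable under `SL(2, ℤ)`, then its
members take integral values wherever the modular invariant does. -/
theorem isIntegral_of_stable {N : ℕ} (hN : N ≠ 0) (S : Finset (ℍ → ℂ))
    (hS : ∀ (γ : SL(2, ℤ)), ∀ f ∈ S, (fun τ => f (γ • τ)) ∈ S) (hQ : ∀ f ∈ S, QInt N f)
    {θ : ℍ} (hθ : IsIntegral ℤ (jj θ)) {f : ℍ → ℂ} (hf : f ∈ S) : IsIntegral ℤ (f θ) := by
  set p : Polynomial ℂ := ∏ f ∈ S, (Polynomial.X - Polynomial.C (f θ)) with hp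
  have hmonic : p.Monic := Polynomial.monic_prod_of_monic _ _ fun f _ => Polynomial.monic_X_sub_C _
  have hcoeff : ∀ i, IsIntegral ℤ (p.coeff i) := by
    intro i
    obtain ⟨P, hP⟩ := level_one hN (QInt_coeff S hQ i) (fun γ τ => congrArg (·.coeff i)
      (prod_smul_of_stable S hS (fun z => Polynomial.X - Polynomial.C z) γ τ))
    rw [hp, hP θ, Polynomial.aeval_eq_sum_range]
    refine IsIntegral.sum _ fun i _ => ?_
    rw [Algebra.smul_def]
    exact (P.coeff i).2.mul (hθ.pow i)
  have hl : p ∈ Polynomial.lifts (algebraMap (integralClosure ℤ ℂ) ℂ) :=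
    (Polynomial.lifts_iff_coeff_lifts _).2 fun i => ⟨⟨_, hcoeff i⟩, rfl⟩
  obtain ⟨q, hq, -, hqm⟩ := Polynomial.lifts_and_natDegree_eq_and_monic hl hmonic
  have hint : IsIntegral (integralClosure ℤ ℂ) (f θ) := by
    refine ⟨q, hqm, ?_⟩
    rw [← Polynomial.eval_map, hq, hp, Polynomial.eval_prod]
    exact Finset.prod_eq_zero hf (by simp)
  exact isIntegral_trans _ hint

/-! ### A theta function -/

/-- The product `∏ (1 - q ^ (n + 1) w)` over `n ≥ 0`. -/
noncomputable def phiQ (q w : ℂ) : ℂ := ∏' n : ℕ, (1 - q ^ (n + 1) * w)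

section phiQ

variable {q : ℂ} (hq : ‖q‖ < 1)
include hq

lemma summable_phiQ (w : ℂ) : Summable fun n : ℕ => ‖q ^ (n + 1) * w‖ := by
  simp only [norm_mul, norm_pow]
  exact ((summable_nat_add_iff 1).mpr
    (summable_geometric_of_lt_one (norm_nonneg _) hq)).mul_right _

lemma multipliable_phiQ (w : ℂ) : Multipliable fun n : ℕ => 1 - q ^ (n + 1) * w := by
  have := multipliable_one_add_of_summable (f := fun n : ℕ => -(q ^ (n + 1) * w))
    (by simpa using summable_phiQ hq w)
  simpa [← sub_eq_add_neg] using this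

lemma phiQ_eq_zero_iff (w : ℂ) : phiQ q w = 0 ↔ ∃ n : ℕ, q ^ (n + 1) * w = 1 := by
  constructor
  · intro h
    by_contra! hn
    have := tprod_one_add_ne_zero_of_summable (f := fun n : ℕ => -(q ^ (n + 1) * w))
      (fun i h => hn i (by linear_combination -h)) (by simpa using summable_phiQ hq w)
    exact this (by simpa [← sub_eq_add_neg, phiQ] using h)
  · rintro ⟨n, hn⟩
    exact tprod_of_exists_eq_zero ⟨n, by rw [hn, sub_self]⟩

lemma phiQ_mul (w : ℂ) : phiQ q w = (1 - q * w) * phiQ q (q * w) := by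
  rw [phiQ, tprod_eq_zero_mul', phiQ]
  · simp [pow_succ, mul_assoc]
  · have := multipliable_phiQ hq (q * w)
    refine this.congr fun n => ?_
    rw [pow_succ _ (n + 1), mul_assoc]

lemma differentiable_phiQ : Differentiable ℂ (phiQ q) := by
  intro w
  have h1 : HasProdLocallyUniformlyOn (fun (n : ℕ) (w : ℂ) => 1 + -(q ^ (n + 1) * w))
      (fun w => ∏' n : ℕ, (1 + -(q ^ (n + 1) * w))) (ball 0 (‖w‖ + 1)) := by
    refine Summable.hasProdLocallyUniformlyOn_nat_one_add isOpen_ball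
      (u := fun n : ℕ => ‖q‖ ^ (n + 1) * (‖w‖ + 1)) ?_ ?_ (fun n => by fun_prop)
    · exact ((summable_nat_add_iff 1).mpr
        (summable_geometric_of_lt_one (norm_nonneg _) hq)).mul_right _
    · refine Eventually.of_forall fun n x hx => ?_
      rw [norm_neg, norm_mul, norm_pow]
      gcongr
      simpa using (mem_ball_zero_iff.1 hx).le
  have h2 := h1.differentiableOn (Eventually.of_forall fun s => by
    refine DifferentiableOn.fun_finsetProd fun i _ => ?_
    fun_prop) isOpen_ball
  have h3 := (h2 w (by simp)).differentiableAt (isOpen_ball.mem_nhds (by simp))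
  exact h3.congr_of_eventuallyEq (.of_forall fun z => by simp [← sub_eq_add_neg, phiQ])

end phiQ

/-- The exponential `exp (2πiz)`. -/
noncomputable def ez (z : ℂ) : ℂ := cexp (2 * π * I * z)

lemma ez_ne_zero (z : ℂ) : ez z ≠ 0 := Complex.exp_ne_zero _
lemma ez_add (z w : ℂ) : ez (z + w) = ez z * ez w := by
  rw [ez, mul_add, Complex.exp_add]; rfl
lemma ez_neg (z : ℂ) : ez (-z) = (ez z)⁻¹ := by rw [ez, mul_neg, Complex.exp_neg]; rfl
@[simp] lemma ez_zero : ez 0 = 1 := by simp [ez]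
lemma ez_one : ez 1 = 1 := by simp [ez]
lemma ez_nat_mul (n : ℕ) (z : ℂ) : ez (n * z) = ez z ^ n := by
  rw [ez, ez, ← Complex.exp_nat_mul]; congr 1; ring
lemma ez_int_mul (n : ℤ) (z : ℂ) : ez (n * z) = ez z ^ n := by
  rw [ez, ez, ← Complex.exp_int_mul]; congr 1; ring
lemma ez_eq_one_iff (z : ℂ) : ez z = 1 ↔ ∃ n : ℤ, z = n := by
  rw [ez, Complex.exp_eq_one_iff]
  refine exists_congr fun n => ?_
  have : (2 * π * I : ℂ) ≠ 0 := Complex.two_pi_I_ne_zero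
  constructor
  · intro h; exact mul_left_cancel₀ this (by rw [h]; ring)
  · rintro rfl; ring
lemma differentiable_ez : Differentiable ℂ ez := by unfold ez; fun_prop
lemma ez_coe (τ : ℍ) : ez τ = qN 1 τ := by rw [qN_eq, ez]; simp

/-- A theta function: an entire function with simple zeros precisely at the points of the
lattice `[τ, 1]`. -/
noncomputable def theta (τ : ℍ) (z : ℂ) : ℂ :=
  (1 - ez z) * phiQ (qN 1 τ) (ez z) * phiQ (qN 1 τ) (ez z)⁻¹

section theta

variable (τ : ℍ)

lemma norm_q : ‖qN 1 τ‖ < 1 := norm_qN_lt_one one_ne_zero τ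

lemma differentiable_theta : Differentiable ℂ (theta τ) := by
  have h1 := (differentiable_phiQ (norm_q τ)).comp differentiable_ez
  have h2 := (differentiable_phiQ (norm_q τ)).comp
    (differentiable_ez.inv ez_ne_zero)
  exact ((differentiable_ez.const_sub 1).mul h1).mul h2

lemma theta_add_one (z : ℂ) : theta τ (z + 1) = theta τ z := by
  simp only [theta, ez_add, ez_one, mul_one]

lemma theta_neg (z : ℂ) : theta τ (-z) = -(ez z)⁻¹ * theta τ z := by
  have := ez_ne_zero z
  simp only [theta, ez_neg, inv_inv]
  field_simp
  ring

lemma theta_add_tau (z : ℂ) : theta τ (z + τ) = -(ez z)⁻¹ * theta τ z := by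
  have h0 := ez_ne_zero z
  have h1 := qN_ne_zero 1 τ
  have h2 := phiQ_mul (norm_q τ) (ez z)
  have h3 := phiQ_mul (norm_q τ) (ez z * qN 1 τ)⁻¹
  have h4 : qN 1 τ * (ez z * qN 1 τ)⁻¹ = (ez z)⁻¹ := by field_simp
  rw [h4] at h3
  simp only [theta, ez_add, ez_coe]
  rw [h3, h2, mul_comm (ez z)]
  field_simp
  ring

lemma theta_zero : theta τ 0 = 0 := by simp [theta]

lemma theta_eq_zero_iff (z : ℂ) : theta τ z = 0 ↔ ∃ a b : ℤ, z = a * τ + b := by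
  have key : ∀ k : ℤ, qN 1 τ ^ k * ez z = 1 ↔ ∃ b : ℤ, z = (-k : ℤ) * τ + b := by
    intro k
    rw [← ez_coe, ← ez_int_mul, ← ez_add, ez_eq_one_iff]
    refine exists_congr fun n => ?_
    push_cast
    constructor <;> intro h <;> linear_combination h
  rw [theta, mul_eq_zero, mul_eq_zero, phiQ_eq_zero_iff (norm_q τ), phiQ_eq_zero_iff (norm_q τ)]
  constructor
  · rintro ((h | ⟨n, h⟩) | ⟨n, h⟩)
    · exact ⟨_, (key 0).1 (by rw [zpow_zero, one_mul]; linear_combination -h)⟩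
    · exact ⟨_, (key (n + 1)).1 (by exact_mod_cast h)⟩
    · refine ⟨_, (key (-(n + 1))).1 ?_⟩
      rw [zpow_neg]
      have := congrArg (·⁻¹) h
      simp only [mul_inv, inv_inv, inv_one] at this
      exact_mod_cast this
  · rintro ⟨a, h⟩
    have h1 := (key (-a)).2 (by simpa using h)
    rcases lt_trichotomy a 0 with h0 | h0 | h0
    · left; right
      obtain ⟨n, hn⟩ := Int.eq_ofNat_of_zero_le (show 0 ≤ -a - 1 by omega)
      refine ⟨n, ?_⟩
      rw [show -a = ((n + 1 : ℕ) : ℤ) by push_cast; omega] at h1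
      exact_mod_cast h1
    · left; left
      rw [h0, neg_zero, zpow_zero, one_mul] at h1
      rw [h1, sub_self]
    · right
      obtain ⟨n, hn⟩ := Int.eq_ofNat_of_zero_le (show 0 ≤ a - 1 by omega)
      refine ⟨n, ?_⟩
      rw [show -a = -((n + 1 : ℕ) : ℤ) by push_cast; omega, zpow_neg] at h1
      have := congrArg (·⁻¹) h1
      simp only [mul_inv, inv_inv, inv_one] at this
      exact_mod_cast this

lemma deriv_theta_ne_zero : deriv (theta τ) 0 ≠ 0 := by
  have h1 := (((differentiable_phiQ (norm_q τ)).comp differentiable_ez).mul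
    ((differentiable_phiQ (norm_q τ)).comp (differentiable_ez.inv ez_ne_zero))) 0
  have h2 : HasDerivAt (fun z => 1 - ez z) (-(2 * π * I)) 0 := by
    have : HasDerivAt (fun z : ℂ => 2 * π * I * z) (2 * π * I) 0 := by
      simpa using (hasDerivAt_id (0 : ℂ)).const_mul (2 * π * I)
    simpa [ez] using (this.cexp).const_sub 1
  have h3 := h2.mul h1.hasDerivAt
  have h4 : theta τ = (fun z => 1 - ez z) * ((phiQ (qN 1 τ) ∘ ez) *
      (phiQ (qN 1 τ) ∘ ez⁻¹)) := by
    ext z; simp [theta, mul_assoc]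
  have h5 : phiQ (qN 1 τ) 1 ≠ 0 := by
    rw [Ne, phiQ_eq_zero_iff (norm_q τ)]
    rintro ⟨n, hn⟩
    have := pow_lt_one₀ (norm_nonneg _) (norm_q τ) n.succ_ne_zero
    rw [← norm_pow, ← mul_one (qN 1 τ ^ _), hn] at this
    simp at this
  rw [h4, HasDerivAt.deriv h3]
  simpa using h5

end theta

/-! ### Differences of values of the Weierstrass function as theta quotients -/

/-- The pair of periods `τ, 1`. -/
noncomputable def pp (τ : ℍ) : PeriodPair where
  ω₁ := τ
  ω₂ := 1
  indep := by
    rw [LinearIndependent.pair_iff]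
    intro s t h
    have h1 := congrArg Complex.im h
    have h2 := congrArg Complex.re h
    simp [τ.im_ne_zero] at h1
    simp [h1] at h2
    exact ⟨h1, h2⟩

lemma mem_pp {τ : ℍ} {x : ℂ} : x ∈ (pp τ).lattice ↔ ∃ a b : ℤ, (a : ℂ) * τ + b = x := by
  rw [PeriodPair.mem_lattice]; simp [pp]

lemma theta_eq_zero_iff' (τ : ℍ) (z : ℂ) : theta τ z = 0 ↔ z ∈ (pp τ).lattice := by
  rw [theta_eq_zero_iff, mem_pp]
  simp only [eq_comm]

/-- The elliptic function `θ(z - b) θ(z + b) / θ(z) ^ 2`. -/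
noncomputable def thetaQuot (τ : ℍ) (b z : ℂ) : ℂ :=
  theta τ (z - b) * theta τ (z + b) / theta τ z ^ 2

section

variable (τ : ℍ) (b : ℂ)

lemma thetaQuot_neg (z : ℂ) : thetaQuot τ b (-z) = thetaQuot τ b z := by
  have h0 := ez_ne_zero z
  have h1 := ez_ne_zero b
  have e1 : ez (z + b) = ez z * ez b := ez_add _ _
  have e2 : ez (z - b) = ez z * (ez b)⁻¹ := by rw [sub_eq_add_neg, ez_add, ez_neg]
  rw [thetaQuot, thetaQuot, show -z - b = -(z + b) by ring, show -z + b = -(z - b) by ring,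
    theta_neg, theta_neg, theta_neg, e1, e2]
  rw [show -(ez z * ez b)⁻¹ * theta τ (z + b) * (-(ez z * (ez b)⁻¹)⁻¹ * theta τ (z - b)) =
    ((ez z)⁻¹ ^ 2) * (theta τ (z - b) * theta τ (z + b)) by field_simp,
    show (-(ez z)⁻¹ * theta τ z) ^ 2 = ((ez z)⁻¹ ^ 2) * theta τ z ^ 2 by ring,
    mul_div_mul_left _ _ (by positivity)]

lemma thetaQuot_add_one : Function.Periodic (thetaQuot τ b) 1 := by
  intro z
  rw [thetaQuot, thetaQuot, show z + 1 - b = z - b + 1 by ring, show z + 1 + b = z + b + 1 by ring,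
    theta_add_one, theta_add_one, theta_add_one]

lemma thetaQuot_add_tau : Function.Periodic (thetaQuot τ b) τ := by
  intro z
  have h0 := ez_ne_zero z
  have h1 := ez_ne_zero b
  have e1 : ez (z + b) = ez z * ez b := ez_add _ _
  have e2 : ez (z - b) = ez z * (ez b)⁻¹ := by rw [sub_eq_add_neg, ez_add, ez_neg]
  rw [thetaQuot, thetaQuot, show z + τ - b = z - b + τ by ring, show z + τ + b = z + b + τ by ring,
    theta_add_tau, theta_add_tau, theta_add_tau, e1, e2]
  rw [show -(ez z * (ez b)⁻¹)⁻¹ * theta τ (z - b) * (-(ez z * ez b)⁻¹ * theta τ (z + b)) =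
    ((ez z)⁻¹ ^ 2) * (theta τ (z - b) * theta τ (z + b)) by field_simp,
    show (-(ez z)⁻¹ * theta τ z) ^ 2 = ((ez z)⁻¹ ^ 2) * theta τ z ^ 2 by ring,
    mul_div_mul_left _ _ (by positivity)]

lemma thetaQuot_periodic (l : ℂ) (hl : l ∈ (pp τ).lattice) :
    Function.Periodic (thetaQuot τ b) l := by
  obtain ⟨m, n, rfl⟩ := mem_pp.1 hl
  simpa using ((thetaQuot_add_tau τ b).int_mul m).add_period ((thetaQuot_add_one τ b).int_mul n)

/-- A lattice-periodic entire function is constant. -/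
lemma eq_of_periodic {f : ℂ → ℂ} (hf : Differentiable ℂ f)
    (hp : ∀ l ∈ (pp τ).lattice, Function.Periodic f l) (z w : ℂ) : f z = f w := by
  refine hf.apply_eq_apply_of_bounded ?_ z w
  set k : ℝ × ℝ → ℂ := fun p => p.1 * τ + p.2
  have hk : Continuous k := by fun_prop
  have hcpt : IsCompact (f '' (k '' (Set.Icc 0 1 ×ˢ Set.Icc 0 1))) :=
    ((isCompact_Icc.prod isCompact_Icc).image hk).image hf.continuous
  refine hcpt.isBounded.subset ?_
  rintro _ ⟨z, rfl⟩
  set x := z.im / τ.im with hx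
  set y := z.re - x * τ.re with hy
  have hz : z = x * τ + y := by
    apply Complex.ext
    · simp [hy]
    · simp [hx, τ.im_ne_zero]
  have hl : (⌊x⌋ : ℂ) * τ + ⌊y⌋ ∈ (pp τ).lattice := mem_pp.2 ⟨_, _, rfl⟩
  refine ⟨k (Int.fract x, Int.fract y), ⟨_, ⟨⟨Int.fract_nonneg _, (Int.fract_lt_one _).le⟩,
    ⟨Int.fract_nonneg _, (Int.fract_lt_one _).le⟩⟩, rfl⟩, ?_⟩
  rw [← hp _ hl, hz]
  congr 1
  simp only [k, Int.fract]
  push_cast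
  ring

open PeriodPair in
set_option maxHeartbeats 1000000 in
/-- The classical identity `θ(z - b) θ(z + b) / θ(z) ^ 2 = K (℘(z) - ℘(b))`: the difference of
the two even elliptic functions `θ(z - b) θ(z + b) / θ(z) ^ 2` and `K ℘(z)` has no pole. -/
theorem thetaQuot_eq (hb : b ∉ (pp τ).lattice) : ∃ K : ℂ, K ≠ 0 ∧ ∀ z ∉ (pp τ).lattice,
    thetaQuot τ b z = K * (℘[pp τ] z - ℘[pp τ] b) := by
  classical
  set Λ := (pp τ).lattice with hΛ
  -- `θ(z) = z r(z)`, and `K` is the leading coefficient of `thetaQuot` at its double pole `0`.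
  set r := dslope (theta τ) 0 with hr
  have hrd : Differentiable ℂ r := by
    rw [← differentiableOn_univ, hr, Complex.differentiableOn_dslope Filter.univ_mem]
    exact (differentiable_theta τ).differentiableOn
  have hr0 : r 0 ≠ 0 := by rw [hr, dslope_same]; exact deriv_theta_ne_zero τ
  have hθr : ∀ z, theta τ z = z * r z := by
    intro z
    have := sub_smul_dslope (theta τ) 0 z
    rw [theta_zero, sub_zero, sub_zero, smul_eq_mul] at this
    exact this.symm
  have hrz : ∀ z ∉ Λ, r z ≠ 0 := by
    intro z hz h
    exact hz ((theta_eq_zero_iff' τ z).1 (by rw [hθr, h, mul_zero]))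
  have hrneg : ∀ z, r (-z) = (ez z)⁻¹ * r z := by
    intro z
    by_cases h0 : z = 0
    · simp [h0]
    · have h1 := theta_neg τ z
      rw [hθr, hθr] at h1
      refine mul_left_cancel₀ (neg_ne_zero.2 h0) ?_
      rw [h1]; ring
  set K := theta τ (0 - b) * theta τ (0 + b) / r 0 ^ 2 with hK
  have hb' : theta τ b ≠ 0 := fun h => hb ((theta_eq_zero_iff' τ b).1 h)
  have hb'' : theta τ (-b) ≠ 0 := fun h => hb (by
    simpa using (pp τ).lattice.neg_mem ((theta_eq_zero_iff' τ (-b)).1 h))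
  have hK0 : K ≠ 0 := by
    rw [hK, zero_sub, zero_add]
    exact div_ne_zero (mul_ne_zero hb'' hb') (pow_ne_zero _ hr0)
  set U : Set ℂ := ((Λ : Set ℂ) \ {0})ᶜ with hU
  have hUo : IsOpen U := (pp τ).isOpen_compl_lattice_sdiff
  have h0U : (0 : ℂ) ∈ U := by simp [hU]
  have hUn : U ∈ 𝓝 (0 : ℂ) := hUo.mem_nhds h0U
  have hUmem : ∀ z ∈ U, z ∈ Λ → z = 0 := by
    intro z hz hzΛ
    by_contra h
    exact hz ⟨hzΛ, h⟩
  -- `P z = z ^ 2 (thetaQuot z - K ℘ z)` away from the lattice. As `P` is even and `P 0 = 0`, it is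
  -- divisible by `z ^ 2`, and the quotient `R` extends `thetaQuot - K ℘` over the origin.
  set P : ℂ → ℂ := fun z => theta τ (z - b) * theta τ (z + b) / r z ^ 2 -
    K * (z ^ 2 * (pp τ).weierstrassPExcept 0 z + 1) with hP
  have hPd : DifferentiableOn ℂ P U := by
    have hθ := differentiable_theta τ
    have h1 : Differentiable ℂ fun z => theta τ (z - b) * theta τ (z + b) :=
      (hθ.comp (differentiable_id.sub_const b)).mul (hθ.comp (differentiable_id.add_const b))
    have h3 : ∀ z ∈ U, r z ^ 2 ≠ 0 := by
      intro z hz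
      by_cases h : z ∈ Λ
      · rw [hUmem z hz h]; exact pow_ne_zero _ hr0
      · exact pow_ne_zero _ (hrz z h)
    have h4 : DifferentiableOn ℂ (fun z => r z ^ 2) U := (hrd.pow 2).differentiableOn
    have h5 : DifferentiableOn ℂ (fun z => theta τ (z - b) * theta τ (z + b) / r z ^ 2) U :=
      h1.differentiableOn.fun_div h4 h3
    have h2 : DifferentiableOn ℂ ((pp τ).weierstrassPExcept 0) U :=
      (pp τ).differentiableOn_weierstrassPExcept 0
    have h6 : DifferentiableOn ℂ (fun z : ℂ => z ^ 2) U :=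
      (differentiable_id.pow 2).differentiableOn
    have h7 : DifferentiableOn ℂ
        (fun z => K * (z ^ 2 * (pp τ).weierstrassPExcept 0 z + 1)) U :=
      ((h6.fun_mul h2).add_const 1).const_mul K
    exact h5.fun_sub h7
  have hPneg : ∀ z, P (-z) = P z := by
    intro z
    have h0 := ez_ne_zero z
    have h1 := ez_ne_zero b
    have e1 : ez (z + b) = ez z * ez b := ez_add _ _
    have e2 : ez (z - b) = ez z * (ez b)⁻¹ := by rw [sub_eq_add_neg, ez_add, ez_neg]
    simp only [hP]
    rw [weierstrassPExcept_neg, neg_zero, neg_sq, show -z - b = -(z + b) by ring,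
      show -z + b = -(z - b) by ring, theta_neg, theta_neg, hrneg, e1, e2]
    congr 1
    rw [show -(ez z * ez b)⁻¹ * theta τ (z + b) * (-(ez z * (ez b)⁻¹)⁻¹ * theta τ (z - b)) =
      ((ez z)⁻¹ ^ 2) * (theta τ (z - b) * theta τ (z + b)) by field_simp, mul_pow,
      mul_div_mul_left _ _ (by positivity)]
  have hP0 : P 0 = 0 := by simp [hP, hK]
  set Q := dslope P 0 with hQ
  have hQd : DifferentiableOn ℂ Q U := (Complex.differentiableOn_dslope hUn).2 hPd
  have hQ0 : Q 0 = 0 := by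
    rw [hQ, dslope_same]
    have h1 := deriv_comp_neg P 0
    simp only [hPneg, neg_zero] at h1
    exact self_eq_neg.1 h1
  have hPQ : ∀ z, P z = z * Q z := by
    intro z
    have := sub_smul_dslope P 0 z
    rw [hP0, sub_zero, sub_zero, smul_eq_mul] at this
    exact this.symm
  set R := dslope Q 0 with hR
  have hRd : DifferentiableOn ℂ R U := (Complex.differentiableOn_dslope hUn).2 hQd
  have hQR : ∀ z, Q z = z * R z := by
    intro z
    have := sub_smul_dslope Q 0 z
    rw [hQ0, sub_zero, sub_zero, smul_eq_mul] at this
    exact this.symm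
  set H : ℂ → ℂ := fun z => thetaQuot τ b z - K * ℘[pp τ] z with hH
  have hHR : ∀ z, z ≠ 0 → H z = R z := by
    intro z hz
    have h1 : P z = z ^ 2 * R z := by rw [hPQ, hQR]; ring
    refine mul_left_cancel₀ (pow_ne_zero 2 hz) ?_
    rw [← h1]
    have h2 := (pp τ).weierstrassPExcept_add 0 z
    simp only [Submodule.coe_zero, sub_zero] at h2
    simp only [hH, hP, ← h2, thetaQuot, hθr z, mul_pow]
    rw [mul_sub]
    congr 1
    · field_simp
    · field_simp
      simp
  -- The entire periodic extension of `thetaQuot - K ℘`.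
  set F : ℂ → ℂ := fun z => if z ∈ Λ then R 0 else H z with hF
  have hFp : ∀ l ∈ Λ, Function.Periodic F l := by
    intro l hl z
    have h1 : z + l ∈ Λ ↔ z ∈ Λ := Submodule.add_mem_iff_left _ hl
    simp only [hF, h1, hH]
    rw [thetaQuot_periodic τ b l hl z, (pp τ).periodic_weierstrassP ⟨l, hl⟩ z]
  have hFR : ∀ z ∈ U, F z = R z := by
    intro z hz
    by_cases h : z ∈ Λ
    · rw [hUmem z hz h]; simp [hF]
    · simp only [hF, h, if_false]
      exact hHR z (fun h0 => h (h0 ▸ Λ.zero_mem))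
  have hFd : Differentiable ℂ F := by
    intro z
    by_cases h : z ∈ Λ
    · have h0 : DifferentiableAt ℂ F 0 := ((hRd 0 h0U).differentiableAt hUn).congr_of_eventuallyEq
        (Filter.eventually_of_mem hUn hFR)
      have h1 : F = fun w => F (w - z) := by
        ext w
        conv_lhs => rw [← sub_add_cancel w z, hFp z h]
      rw [h1]
      rw [← sub_self z] at h0
      exact h0.comp (f := fun w => w - z) z (differentiableAt_id.sub_const z)
    · have ho : ((Λ : Set ℂ)ᶜ) ∈ 𝓝 z := (pp τ).isClosed_lattice.isOpen_compl.mem_nhds h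
      have hθ := differentiable_theta τ
      have h1 : Differentiable ℂ fun z => theta τ (z - b) * theta τ (z + b) :=
        (hθ.comp (differentiable_id.sub_const b)).mul (hθ.comp (differentiable_id.add_const b))
      have h2 : DifferentiableAt ℂ H z := by
        refine ((h1 z).div ((hθ.pow 2) z) (pow_ne_zero _ fun h' =>
          h ((theta_eq_zero_iff' τ z).1 h'))).sub ?_
        exact (((pp τ).differentiableOn_weierstrassP z h).differentiableAt ho).const_mul K
      refine h2.congr_of_eventuallyEq (Filter.eventually_of_mem ho fun w hw => ?_)
      exact if_neg hw
  have hconst := eq_of_periodic τ hFd hFp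
  refine ⟨K, hK0, fun z hz => ?_⟩
  have h1 := hconst z b
  simp only [hF, if_neg hz, if_neg hb, hH] at h1
  have h2 : thetaQuot τ b b = 0 := by rw [thetaQuot, sub_self, theta_zero]; simp
  rw [h2] at h1
  linear_combination h1

end

open PeriodPair in
/-- Ratios of differences of Weierstrass values as theta quotients. -/
theorem wp_ratio (τ : ℍ) {a b c : ℂ} (ha : a ∉ (pp τ).lattice) (hb : b ∉ (pp τ).lattice)
    (hc : c ∉ (pp τ).lattice) :
    (℘[pp τ] a - ℘[pp τ] b) / (℘[pp τ] c - ℘[pp τ] b) =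
      theta τ (a - b) * theta τ (a + b) * theta τ c ^ 2 /
        (theta τ (c - b) * theta τ (c + b) * theta τ a ^ 2) := by
  obtain ⟨K, hK, h⟩ := thetaQuot_eq τ b hb
  rw [← mul_div_mul_left _ _ hK, ← h a ha, ← h c hc, thetaQuot, thetaQuot]
  rw [div_div_div_eq]
  ring

open PeriodPair in
lemma wp_eq (τ : ℍ) (z : ℂ) : wp τ 1 z = ℘[pp τ] z := by
  have h := (pp τ).weierstrassPExcept_add 0 z
  simp only [Submodule.coe_zero, sub_zero] at h
  rw [← h, wp, add_comm]
  simp only [ne_eq, OfNat.ofNat_ne_zero, not_false_eq_true, zero_pow, div_zero, sub_zero]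
  congr 1
  rw [weierstrassPExcept, ← (pp τ).latticeEquivProd.symm.toEquiv.tsum_eq]
  refine (tsum_subtype {p : ℤ × ℤ | p ≠ 0}
    (fun p => 1 / (z - latticePt τ 1 p) ^ 2 - 1 / latticePt τ 1 p ^ 2)).trans ?_
  refine tsum_congr fun p => ?_
  have h1 : ((pp τ).latticeEquivProd.symm p : ℂ) = latticePt τ 1 p := by
    rw [latticeEquiv_symm_apply]; rfl
  have h2 : latticePt τ 1 p = 0 ↔ p = 0 := by
    rw [← h1]; simp
  simp only [LinearEquiv.coe_toEquiv, h1, h2, Set.indicator_apply, Set.mem_ofPred_eq]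
  by_cases hp : p = 0 <;> simp [hp]

open PeriodPair in
/-- Homogeneity of the Weierstrass function. -/
lemma wp_homog {L L' : PeriodPair} {c : ℂ} (hc : c ≠ 0)
    (h : ∀ x, x ∈ L'.lattice ↔ c * x ∈ L.lattice) (z : ℂ) :
    ℘[L'] (z / c) = c ^ 2 * ℘[L] z := by
  let e : L'.lattice ≃ L.lattice :=
    { toFun := fun x => ⟨c * x, (h x).1 x.2⟩
      invFun := fun y => ⟨c⁻¹ * y, (h _).2 (by rw [mul_inv_cancel_left₀ hc]; exact y.2)⟩
      left_inv := fun x => by ext; simp [hc]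
      right_inv := fun x => by ext; simp [hc] }
  rw [weierstrassP, weierstrassP, ← e.tsum_eq, ← tsum_mul_left]
  refine tsum_congr fun l => ?_
  have h1 : ((e l : L.lattice) : ℂ) = c * l := rfl
  rw [h1, mul_sub, show z / c - l = (z - c * l) / c by field_simp]
  congr 1
  · rw [div_pow, one_div_div, mul_one_div]
  · rw [mul_pow, mul_one_div, ← div_div, div_self (pow_ne_zero 2 hc)]

/-! ### Theta values at torsion points of composite order -/

/-- If `M` has at least two prime factors and `ζ` is a primitive `M`-th root of unity, then
`1 - ζ` is a unit, because its conjugates multiply to `Φ_M(1) = 1`. -/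
lemma isIntegral_inv_one_sub {M : ℕ} (hM : 2 ≤ M.primeFactors.card) {ζ : ℂ}
    (hζ : IsPrimitiveRoot ζ M) : IsIntegral ℤ (1 - ζ)⁻¹ := by
  classical
  have hM0 : 0 < M := by
    rcases Nat.eq_zero_or_pos M with rfl | h
    · simp at hM
    · exact h
  have h1 : Polynomial.eval 1 (Polynomial.cyclotomic M ℂ) = 1 := by
    refine Polynomial.eval_one_cyclotomic_not_prime_pow fun {p} hp k h => ?_
    rcases Nat.eq_zero_or_pos k with rfl | hk
    · rw [pow_zero] at h; subst h; simp at hM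
    · rw [← h, Nat.primeFactors_pow _ hk.ne', hp.primeFactors] at hM
      simp at hM
  rw [Polynomial.cyclotomic_eq_prod_X_sub_primitiveRoots hζ, Polynomial.eval_prod,
    ← Finset.mul_prod_erase _ _ ((mem_primitiveRoots hM0).2 hζ)] at h1
  simp only [Polynomial.eval_sub, Polynomial.eval_X, Polynomial.eval_C] at h1
  rw [inv_eq_of_mul_eq_one_right h1]
  refine IsIntegral.prod _ fun μ hμ => isIntegral_one.sub ?_
  exact ((mem_primitiveRoots hM0).1 (Finset.mem_of_mem_erase hμ)).isIntegral hM0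

section

variable {M e : ℕ} (hM : 2 ≤ M.primeFactors.card) (he : e ≠ 0)

lemma ne_zero_of_card {M : ℕ} (hM : 2 ≤ M.primeFactors.card) : M ≠ 0 := by
  rintro rfl; simp at hM

lemma ez_rat_pow {M : ℕ} (hM : M ≠ 0) (b : ℤ) : ez (b / M) ^ M = 1 := by
  rw [← ez_nat_mul, ez_eq_one_iff]
  exact ⟨b, by field_simp⟩

lemma ez_torsion {M e : ℕ} (hM : M ≠ 0) (he : e ≠ 0) (a b : ℤ) (τ : ℍ) :
    ez ((a * τ + b) / M) = ez (b / M) * qN (M * e) τ ^ (e * a) := by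
  have hM' : (M : ℂ) ≠ 0 := by exact_mod_cast hM
  have he' : (e : ℂ) ≠ 0 := by exact_mod_cast he
  rw [qN_eq, ez, ez, ← Complex.exp_int_mul, ← Complex.exp_add]
  congr 1
  push_cast
  field_simp
  ring

include hM he

lemma unitQ_ez (a b : ℤ) : UnitQ (M * e) (fun τ => ez ((a * τ + b) / M)) := by
  have hM0 := ne_zero_of_card hM
  have h1 := ez_rat_pow hM0 b
  have h2 : IsIntegral ℤ (ez (b / M)) :=
    .of_pow (Nat.pos_of_ne_zero hM0) (by rw [h1]; exact isIntegral_one)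
  have h3 : IsIntegral ℤ (ez (b / M))⁻¹ :=
    .of_pow (Nat.pos_of_ne_zero hM0) (by rw [inv_pow, h1, inv_one]; exact isIntegral_one)
  have := (UnitQ.const (N := M * e) (ez_ne_zero (b / M)) h2 h3).mul (UnitQ.qpow (e * a))
  simpa only [ez_torsion hM0 he a b] using this

/-- The reduced case `0 ≤ k < M` of `unitQ_theta`, where the product defining theta is a power
series in `exp (2πiτ/(Me))` with constant term `1` if `k > 0`, and `1 - ζ` if `k = 0`. -/
lemma unitQ_theta_aux (k : ℕ) (hk : k < M) (b : ℤ)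
    (hc : k = 0 → IsCoprime (M : ℤ) b) :
    UnitQ (M * e) (fun τ => theta τ (((k : ℤ) * τ + b) / M)) := by
  have hM0 := ne_zero_of_card hM
  have hN : M * e ≠ 0 := mul_ne_zero hM0 he
  set ζ := ez (b / M) with hζ
  have h1 : ζ ^ M = 1 := ez_rat_pow hM0 b
  have h2 : IsIntegral ℤ ζ :=
    .of_pow (Nat.pos_of_ne_zero hM0) (by rw [h1]; exact isIntegral_one)
  have h3 : IsIntegral ℤ ζ⁻¹ :=
    .of_pow (Nat.pos_of_ne_zero hM0) (by rw [inv_pow, h1, inv_one]; exact isIntegral_one)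
  have hn : ‖ζ‖ = 1 := Complex.norm_eq_one_of_pow_eq_one h1 hM0
  have hn' : ‖ζ⁻¹‖ = 1 := by rw [norm_inv, hn, inv_one]
  have hζ0 : ζ ≠ 0 := ez_ne_zero _
  have hlt : e * k < M * e := by
    rw [mul_comm M]; exact Nat.mul_lt_mul_of_pos_left hk (Nat.pos_of_ne_zero he)
  have hp1 : ∀ n : ℕ, n + 1 ≤ M * e * (n + 1) := fun n =>
    Nat.le_mul_of_pos_left _ (Nat.pos_of_ne_zero hN)
  have he1 : ∀ n : ℕ, n + 1 ≤ M * e * (n + 1) + e * k := fun n => (hp1 n).trans (Nat.le_add_right _ _)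
  have he2 : ∀ n : ℕ, n + 1 ≤ M * e * (n + 1) - e * k := fun n => by
    have : n ≤ M * e * n := Nat.le_mul_of_pos_left _ (Nat.pos_of_ne_zero hN)
    rw [mul_add, mul_one]; omega
  set g : ℂ → ℂ := fun x => (1 - ζ * x ^ (e * k)) *
    (∏' n : ℕ, (1 - ζ * x ^ (M * e * (n + 1) + e * k))) *
    (∏' n : ℕ, (1 - ζ⁻¹ * x ^ (M * e * (n + 1) - e * k))) with hg
  have hgd : DiscInt g :=
    (((DiscInt.const isIntegral_one).sub (DiscInt.monomial h2 _)).mul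
      (discInt_tprod (c := fun _ => ζ) (fun _ => h2) (fun _ => hn.le) he1)).mul
      (discInt_tprod (c := fun _ => ζ⁻¹) (fun _ => h3) (fun _ => hn'.le) he2)
  have hprim : k = 0 → IsPrimitiveRoot ζ M := by
    rintro rfl
    refine IsPrimitiveRoot.mk_of_lt _ (Nat.pos_of_ne_zero hM0) h1 fun l hl0 hlM hl => ?_
    rw [hζ, ← ez_nat_mul, ez_eq_one_iff] at hl
    obtain ⟨n, hn⟩ := hl
    have hM' : (M : ℂ) ≠ 0 := by exact_mod_cast hM0
    have h4 : (l : ℤ) * b = n * M := by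
      have : (l : ℂ) * b = n * M := by rw [← hn]; field_simp
      exact_mod_cast this
    have h5 : (M : ℤ) ∣ l := (hc rfl).dvd_of_dvd_mul_right ⟨n, by rw [h4]; ring⟩
    exact absurd (Nat.le_of_dvd hl0 (by exact_mod_cast h5)) (by omega)
  have hgne : ∀ x, ‖x‖ < 1 → g x ≠ 0 := by
    intro x hx
    refine mul_ne_zero (mul_ne_zero ?_ (tprod_ne_zero' (c := fun _ => ζ) (fun _ => hn.le) he1 hx))
      (tprod_ne_zero' (c := fun _ => ζ⁻¹) (fun _ => hn'.le) he2 hx)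
    intro h
    rw [sub_eq_zero] at h
    rcases Nat.eq_zero_or_pos k with h0 | h0
    · have := (hprim h0).ne_one (by
        by_contra h; push Not at h
        interval_cases M <;> simp at hM)
      rw [h0] at h
      simp only [mul_zero, pow_zero, mul_one] at h
      exact this h.symm
    · have h4 : ‖ζ * x ^ (e * k)‖ < 1 := by
        rw [norm_mul, hn, one_mul, norm_pow]
        exact pow_lt_one₀ (norm_nonneg _) hx (by positivity)
      rw [← h, norm_one] at h4
      exact lt_irrefl _ h4
  have hg0 : IsIntegral ℤ (g 0)⁻¹ := by
    have e1 : g 0 = 1 - ζ * 0 ^ (e * k) := by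
      simp only [hg]
      rw [tprod_zero' (c := fun _ => ζ) he1, tprod_zero' (c := fun _ => ζ⁻¹) he2, mul_one, mul_one]
    rw [e1]
    rcases Nat.eq_zero_or_pos k with h0 | h0
    · simpa [h0] using isIntegral_inv_one_sub hM (hprim h0)
    · rw [zero_pow (by positivity)]
      simpa using isIntegral_one
  have key := UnitQ.of_discInt hN hgd hgne hg0
  convert key using 2 with τ
  have hx0 := qN_ne_zero (M * e) τ
  have hq : qN 1 τ = qN (M * e) τ ^ (M * e) := (qN_pow_self hN τ).symm
  have hez := ez_torsion hM0 he k b τ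
  rw [← hζ, show (e : ℤ) * (k : ℤ) = ((e * k : ℕ) : ℤ) by push_cast; rfl, zpow_natCast] at hez
  simp only [theta, hez, hq, hg, phiQ]
  congr 1
  · congr 1
    refine tprod_congr fun n => ?_
    rw [pow_add, pow_mul]; ring
  · refine tprod_congr fun n => ?_
    rw [pow_sub₀ _ hx0 (by have := he2 n; omega), ← pow_mul, mul_inv]; ring

/-- The theta function at a torsion point of exact order `M`, where `M` has at least two prime
factors, and its inverse have integral `q`-expansions. -/
theorem unitQ_theta (a b : ℤ) (hc : IsCoprime a b) :
    UnitQ (M * e) (fun τ => theta τ ((a * τ + b) / M)) := by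
  have hM0 := ne_zero_of_card hM
  have hM' : (M : ℂ) ≠ 0 := by exact_mod_cast hM0
  -- Quasi-periodicity of theta reduces `a` to its residue modulo `M`.
  have hstep : ∀ a b : ℤ, ∀ τ : ℍ, theta τ (((a + M : ℤ) * τ + b) / M) =
      -(ez ((a * τ + b) / M))⁻¹ * theta τ ((a * τ + b) / M) := by
    intro a b τ
    rw [← theta_add_tau]
    congr 1
    push_cast
    field_simp
    ring
  have hneg : ∀ a b : ℤ, UnitQ (M * e) (fun τ => -(ez ((a * τ + b) / M))⁻¹) := by
    intro a b
    have h1 : UnitQ (M * e) (fun _ => (-1 : ℂ)) :=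
      .const (by norm_num) isIntegral_one.neg (by rw [inv_neg, inv_one]; exact isIntegral_one.neg)
    simpa using h1.mul (unitQ_ez hM he a b).inv
  have hup : ∀ a b : ℤ, UnitQ (M * e) (fun τ => theta τ ((a * τ + b) / M)) ↔
      UnitQ (M * e) (fun τ => theta τ (((a + M : ℤ) * τ + b) / M)) := by
    intro a b
    simp only [hstep]
    refine ⟨fun h => (hneg a b).mul h, fun h => ?_⟩
    have := (hneg a b).inv.mul h
    refine cast (congrArg _ (funext fun τ => ?_)) this
    rw [inv_mul_cancel_left₀ ((hneg a b).1 τ)]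
  have hMz : (M : ℤ) ≠ 0 := by exact_mod_cast hM0
  obtain ⟨k, hk⟩ := Int.eq_ofNat_of_zero_le (Int.emod_nonneg a hMz)
  have hkM : k < M := by
    have := Int.emod_lt_of_pos a (show (0 : ℤ) < M by omega)
    omega
  have hall : ∀ j : ℤ, UnitQ (M * e) (fun τ => theta τ (((k + M * j : ℤ) * τ + b) / M)) ↔
      UnitQ (M * e) (fun τ => theta τ (((k : ℤ) * τ + b) / M)) := by
    intro j
    induction j with
    | zero => simp
    | succ j ih =>
      rw [← ih, hup (k + M * j) b, show (k + M * j : ℤ) + M = k + M * (j + 1) by ring]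
    | pred j ih =>
      rw [← ih, hup (k + M * (-j - 1)) b, show (k + M * (-j - 1) : ℤ) + M = k + M * -j by ring]
  have ha : a = k + M * (a / M) := by rw [← hk, Int.emod_add_mul_ediv]
  rw [ha, hall]
  refine unitQ_theta_aux hM he k hkM b fun h0 => ?_
  rw [h0, Nat.cast_zero, zero_add] at ha
  rw [ha] at hc
  exact hc.of_mul_left_left

end

/-! ### The modular conjugates of the Weierstrass unit -/

open PeriodPair in
/-- The value of the Weierstrass function at the torsion point `(aτ + b) / N`. -/
noncomputable def wv (N : ℕ) (a b : ℤ) (τ : ℍ) : ℂ := ℘[pp τ] ((a * τ + b) / N)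

/-- Transformation under `SL(2, ℤ)`: the point `(a, b)` is sent to `(a, b) γ`. -/
lemma wv_smul (N : ℕ) (a b : ℤ) (γ : SL(2, ℤ)) (τ : ℍ) :
    wv N a b (γ • τ) = ((γ 1 0 : ℂ) * τ + γ 1 1) ^ 2 *
      wv N (a * γ 0 0 + b * γ 1 0) (a * γ 0 1 + b * γ 1 1) τ := by
  have hj : (γ 1 0 : ℂ) * τ + γ 1 1 ≠ 0 := denom_ne_zero γ τ
  have hdet : (γ 0 0 : ℂ) * γ 1 1 - γ 0 1 * γ 1 0 = 1 := by
    have := γ.det_coe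
    rw [Matrix.det_fin_two] at this
    exact_mod_cast this
  have hγ : ((γ • τ : ℍ) : ℂ) = ((γ 0 0 : ℂ) * τ + γ 0 1) / ((γ 1 0 : ℂ) * τ + γ 1 1) := by
    simpa using coe_specialLinearGroup_apply γ τ
  have hmem : ∀ x, x ∈ (pp (γ • τ)).lattice ↔
      ((γ 1 0 : ℂ) * τ + γ 1 1) * x ∈ (pp τ).lattice := by
    intro x
    rw [mem_pp, mem_pp, hγ]
    constructor
    · rintro ⟨s, t, rfl⟩
      refine ⟨s * γ 0 0 + t * γ 1 0, s * γ 0 1 + t * γ 1 1, ?_⟩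
      push_cast
      field_simp
      ring
    · rintro ⟨s, t, h⟩
      refine ⟨s * γ 1 1 - t * γ 1 0, t * γ 0 0 - s * γ 0 1, ?_⟩
      refine mul_left_cancel₀ hj ?_
      rw [← h]
      push_cast
      field_simp
      linear_combination (s * τ + t) * hdet
  rw [wv, wv, ← wp_homog hj hmem, hγ, div_right_comm, mul_div_assoc', div_add' _ _ _ hj]
  congr 3
  push_cast
  ring

lemma wv_add {N : ℕ} (hN : N ≠ 0) {a b a' b' : ℤ} (ha : a ≡ a' [ZMOD N]) (hb : b ≡ b' [ZMOD N])
    (τ : ℍ) : wv N a b τ = wv N a' b' τ := by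
  obtain ⟨s, hs⟩ := ha.dvd
  obtain ⟨t, ht⟩ := hb.dvd
  have hN' : (N : ℂ) ≠ 0 := by exact_mod_cast hN
  rw [wv, wv, ← (pp τ).periodic_weierstrassP ⟨_, mem_pp.2 ⟨s, t, rfl⟩⟩]
  congr 1
  rw [eq_add_of_sub_eq hs, eq_add_of_sub_eq ht]
  push_cast
  field_simp
  ring

/-- The function obtained from `h_{m,n}` by letting the integral matrix `A` act from the right on
the row vectors defining its torsion points. -/
noncomputable def hA (m n : ℕ) (A : Matrix (Fin 2) (Fin 2) ℤ) (τ : ℍ) : ℂ :=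
  (wv (m * n) (A 1 0) (A 1 1) τ - wv (m * n) (n * A 0 0) (n * A 0 1) τ) /
    (wv (m * n) (n * A 1 0) (n * A 1 1) τ - wv (m * n) (n * A 0 0) (n * A 0 1) τ)

lemma hA_smul (m n : ℕ) (A : Matrix (Fin 2) (Fin 2) ℤ) (γ : SL(2, ℤ)) (τ : ℍ) :
    hA m n A (γ • τ) = hA m n (A * γ) τ := by
  have hj : (γ 1 0 : ℂ) * τ + γ 1 1 ≠ 0 := denom_ne_zero γ τ
  simp only [hA, wv_smul, ← mul_sub]
  rw [mul_div_mul_left _ _ (pow_ne_zero 2 hj)]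
  simp only [Matrix.mul_apply, Fin.sum_univ_two, mul_add, mul_assoc]

lemma hA_one {m n : ℕ} (hm : m ≠ 0) (hn : n ≠ 0) (τ : ℍ) : hA m n 1 τ = hweier m n τ := by
  have hm' : (m : ℂ) ≠ 0 := by exact_mod_cast hm
  have hn' : (n : ℂ) ≠ 0 := by exact_mod_cast hn
  simp only [hA, hweier, wprs, wv, wp_eq]
  congr 3 <;> simp <;> field_simp

lemma hA_congr {m n : ℕ} (hN : m * n ≠ 0) {A B : Matrix (Fin 2) (Fin 2) ℤ}
    (h : ∀ i j, A i j ≡ B i j [ZMOD (m * n : ℕ)]) : hA m n A = hA m n B := by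
  ext τ
  rw [hA, hA, wv_add hN (h 1 0) (h 1 1), wv_add hN ((h 0 0).mul_left n) ((h 0 1).mul_left n),
    wv_add hN ((h 1 0).mul_left n) ((h 1 1).mul_left n)]

lemma finite_range_hA {m n : ℕ} (hN : m * n ≠ 0) : (Set.range (hA m n)).Finite := by
  have : NeZero (m * n) := ⟨hN⟩
  refine (Set.finite_range fun B : Matrix (Fin 2) (Fin 2) (ZMod (m * n)) =>
    hA m n (B.map fun x => (x.val : ℤ))).subset ?_
  rintro _ ⟨A, rfl⟩
  refine ⟨A.map (Int.cast : ℤ → ZMod (m * n)), hA_congr hN fun i j => ?_⟩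
  rw [← ZMod.intCast_eq_intCast_iff]
  simp

/-- Every conjugate `h ∘ γ` and its inverse have integral `q`-expansions: by `wp_ratio` it is a
product of theta values at torsion points of order `m` or `mn` and of inverses of such values. -/
lemma unitQ_hA {m n : ℕ} (hm : 2 ≤ m.primeFactors.card) (hn : n ≠ 0) (γ : SL(2, ℤ)) :
    UnitQ (m * n) (hA m n γ) := by
  have hm0 := ne_zero_of_card hm
  have hm' : (m : ℂ) ≠ 0 := by exact_mod_cast hm0
  have hn' : (n : ℂ) ≠ 0 := by exact_mod_cast hn
  have hN : 2 ≤ (m * n).primeFactors.card := hm.trans (Finset.card_le_card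
    (Nat.primeFactors_mono (dvd_mul_right _ _) (mul_ne_zero hm0 hn)))
  have hdet : γ 0 0 * γ 1 1 - γ 0 1 * γ 1 0 = 1 := by
    have := γ.det_coe
    rwa [Matrix.det_fin_two] at this
  have hc : ∀ s : ℤ, IsCoprime (γ 1 0 + s * γ 0 0) (γ 1 1 + s * γ 0 1) := fun s =>
    ⟨-γ 0 1, γ 0 0, by linear_combination hdet⟩
  have hb : UnitQ (m * n) (fun τ => theta τ ((γ 0 0 * τ + γ 0 1) / m)) :=
    unitQ_theta hm hn _ _ ⟨γ 1 1, -γ 1 0, by linear_combination hdet⟩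
  have hT1 : ∀ s : ℤ, UnitQ (m * n) (fun τ => theta τ
      (((γ 1 0 + s * γ 0 0 : ℤ) * τ + (γ 1 1 + s * γ 0 1 : ℤ)) / (m * n : ℕ))) := fun s => by
    simpa only [mul_one] using unitQ_theta hN one_ne_zero _ _ (hc s)
  have hT2 : ∀ s : ℤ, UnitQ (m * n) (fun τ => theta τ
      (((γ 1 0 + s * γ 0 0 : ℤ) * τ + (γ 1 1 + s * γ 0 1 : ℤ)) / m)) := fun s =>
    unitQ_theta hm hn _ _ (hc s)
  have key := (((hT1 (-1 * n)).mul (hT1 (1 * n))).mul ((hT2 0).pow 2)).div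
    (((hT2 (-1)).mul (hT2 1)).mul ((hT1 0).pow 2))
  refine cast (congrArg _ (funext fun τ => ?_)) key
  have hbτ := mt (theta_eq_zero_iff' τ _).2 (hb.1 τ)
  have haτ := mt (theta_eq_zero_iff' τ _).2 ((hT1 0).1 τ)
  have hcτ := mt (theta_eq_zero_iff' τ _).2 ((hT2 0).1 τ)
  have h := wp_ratio τ haτ hbτ hcτ
  have e1 : ((γ 0 0 : ℂ) * τ + γ 0 1) / m =
      ((n * γ 0 0 : ℤ) * τ + (n * γ 0 1 : ℤ)) / (m * n : ℕ) := by
    push_cast; field_simp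
  have e2 : ((γ 1 0 + 0 * γ 0 0 : ℤ) * (τ : ℂ) + (γ 1 1 + 0 * γ 0 1 : ℤ)) / m =
      ((n * γ 1 0 : ℤ) * τ + (n * γ 1 1 : ℤ)) / (m * n : ℕ) := by
    push_cast; field_simp; ring
  have e3 : ((γ 1 0 : ℂ) * τ + γ 1 1) / (m * n : ℕ) =
    ((γ 1 0 + 0 * γ 0 0 : ℤ) * τ + (γ 1 1 + 0 * γ 0 1 : ℤ)) / (m * n : ℕ) := by simp
  have d1 : ∀ s : ℤ, ((γ 1 0 + s * n * γ 0 0 : ℤ) * (τ : ℂ) + (γ 1 1 + s * n * γ 0 1 : ℤ)) /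
      (m * n : ℕ) = ((γ 1 0 + 0 * γ 0 0 : ℤ) * τ + (γ 1 1 + 0 * γ 0 1 : ℤ)) / (m * n : ℕ) +
        s * (((γ 0 0 : ℂ) * τ + γ 0 1) / m) := fun s => by
    push_cast; field_simp; ring
  have d2 : ∀ s : ℤ, ((γ 1 0 + s * γ 0 0 : ℤ) * (τ : ℂ) + (γ 1 1 + s * γ 0 1 : ℤ)) / m =
      ((γ 1 0 + 0 * γ 0 0 : ℤ) * τ + (γ 1 1 + 0 * γ 0 1 : ℤ)) / m +
        s * (((γ 0 0 : ℂ) * τ + γ 0 1) / m) := fun s => by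
    push_cast; field_simp; ring
  simp only [hA, wv]
  rw [← e1, ← e2, e3, h, d1 (-1), d1 1, d2 (-1), d2 1]
  simp only [Int.cast_one, Int.cast_neg, one_mul, neg_one_mul, ← sub_eq_add_neg]

/-- The values of `h_{m,n}` at points with integral modular invariant are units. -/
theorem hweier_unit {m n : ℕ} (hm : 2 ≤ m.primeFactors.card) (hn : n ≠ 0) {θ : ℍ}
    (hθ : IsIntegral ℤ (jj θ)) :
    IsIntegral ℤ (hweier m n θ) ∧ IsIntegral ℤ (hweier m n θ)⁻¹ := by
  classical
  have hm0 := ne_zero_of_card hm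
  have hN := mul_ne_zero hm0 hn
  have hfin : (Set.range fun γ : SL(2, ℤ) => hA m n γ).Finite :=
    (finite_range_hA hN).subset (by rintro _ ⟨γ, rfl⟩; exact ⟨_, rfl⟩)
  set S := hfin.toFinset with hS
  have hmemS : ∀ f, f ∈ S ↔ ∃ γ : SL(2, ℤ), hA m n γ = f := fun f => by simp [hS]
  have h1 : hA m n ((1 : SL(2, ℤ)) : Matrix (Fin 2) (Fin 2) ℤ) ∈ S := (hmemS _).2 ⟨1, rfl⟩
  have hstab : ∀ γ : SL(2, ℤ), ∀ f ∈ S, (fun τ => f (γ • τ)) ∈ S := by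
    intro γ f hf
    obtain ⟨δ, rfl⟩ := (hmemS _).1 hf
    refine (hmemS _).2 ⟨δ * γ, ?_⟩
    ext τ
    rw [hA_smul, Matrix.SpecialLinearGroup.coe_mul]
  have he : hA m n ((1 : SL(2, ℤ)) : Matrix (Fin 2) (Fin 2) ℤ) θ = hweier m n θ := by
    rw [Matrix.SpecialLinearGroup.coe_one, hA_one hm0 hn]
  rw [← he]
  constructor
  · refine isIntegral_of_stable hN S hstab (fun f hf => ?_) hθ h1
    obtain ⟨δ, rfl⟩ := (hmemS _).1 hf
    exact (unitQ_hA hm hn δ).2.1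
  · refine isIntegral_of_stable hN (S.image fun f τ => (f τ)⁻¹) (fun γ f hf => ?_)
      (fun f hf => ?_) hθ (f := fun τ => (hA m n ((1 : SL(2, ℤ)) : Matrix (Fin 2) (Fin 2) ℤ) τ)⁻¹)
      (Finset.mem_image_of_mem _ h1)
    · obtain ⟨g, hg, rfl⟩ := Finset.mem_image.1 hf
      exact Finset.mem_image.2 ⟨_, hstab γ g hg, rfl⟩
    · obtain ⟨g, hg, rfl⟩ := Finset.mem_image.1 hf
      obtain ⟨δ, rfl⟩ := (hmemS _).1 hg
      exact (unitQ_hA hm hn δ).2.2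

open NumberField in
/-- A quadratic field without real embeddings has one complex place, so its discriminant has sign
`(-1) ^ 1`. -/
theorem discr_neg_of_quadratic (K : Type*) [Field K] [NumberField K]
    (hdeg : Module.finrank ℚ K = 2) (hreal : IsEmpty (K →+* ℝ)) : discr K < 0 := by
  classical
  have h1 : InfinitePlace.nrRealPlaces K = 0 := by
    rw [InfinitePlace.nrRealPlaces, Fintype.card_eq_zero_iff]
    exact ⟨fun v => hreal.false (InfinitePlace.embedding_of_isReal v.2)⟩
  have h2 := InfinitePlace.card_add_two_mul_card_eq_rank K
  rw [h1, hdeg] at h2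
  have h3 : InfinitePlace.nrComplexPlaces K = 1 := by omega
  have h4 := sign_discr K
  rw [h3, pow_one] at h4
  exact Int.sign_eq_neg_one_iff_neg.1 h4

end ModularFunctions

open NumberField in
theorem weierstrass_unit_singular_value_is_unit
    (K : Type*) [Field K] [NumberField K]
    (hdeg : Module.finrank ℚ K = 2) (hreal : IsEmpty (K →+* ℝ))
    (hK1 : discr K ≠ -4) (hK3 : discr K ≠ -3)
    (m n : ℕ) (hm : 2 ≤ m) (hn : 1 ≤ n)
    (hmfac : 2 ≤ m.primeFactors.card)
    (θK : ℂ)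
    (hθK : θK = ((discr K : ℂ) + Complex.I * (Real.sqrt (-(discr K : ℝ)) : ℂ)) / 2) :
    IsIntegral ℤ (hweier m n θK) ∧ IsIntegral ℤ (hweier m n θK)⁻¹ := by
  have hd := discr_neg_of_quadratic K hdeg hreal
  have hd' : (0 : ℝ) < -(discr K : ℝ) := by
    have : (discr K : ℝ) < 0 := by exact_mod_cast hd
    linarith
  have hs : ((Real.sqrt (-(discr K : ℝ)) : ℝ) : ℂ) ^ 2 = -(discr K : ℂ) := by
    rw [← Complex.ofReal_pow, Real.sq_sqrt hd'.le]; push_cast; rfl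
  have him : 0 < θK.im := by
    rw [hθK]
    simpa using Real.sqrt_pos.2 hd'
  refine hweier_unit hmfac (by omega) (θ := ⟨θK, him⟩) (jj_integral_CM hd _ ?_)
  simp only [hθK]
  linear_combination hs * Complex.I ^ 2 - (discr K : ℂ) * Complex.I_sq
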